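/- For every F ∈ ℕ and L ∈ [1,∞) there exist constants E, E′, E″, E‴ > 0 such that the following holds. Let R be a commutative ring, let (X,w) be a properly weighted R-oriented d-poset with d ≥ 2, lower irregularity L(X) ≤ L, and F^max_{0,2}(X) ≤ F and F^max_{1,2}(X) ≤ F, and let 𝓕 be an R-sheaf on X. Let ε, ε′ > 0 and α_0, β_0, α_{−1}, α_{‖}, β_{‖} ≥ 0, β_{−1} > 0, and assume: (1a) cbe_{−1}(X_v, w_v, 𝓕_v) ≥ ε for every v ∈ X(0); (1b) cbe_{−1}(X_e, w_e, 𝓕_e) ≥ ε′ for every e ∈ X(1); (1c) cbe_0(X_v, w_v, 𝓕_v) ≥ ε′ for every v ∈ X(0); (2a) ugr(X_v, w_v) is an (α_0, β_0)-skeleton expander for every v ∈ X(0); (2b) ugr(X, w) is an (α_{−1}, β_{−1})-skeleton expander; (2c) the related weighted hypergraph NI^{1,1,2}(X,w) is an (α_{‖}, β_{‖})-skeleton expander. If α_{−1} < E·ε and there exist h_{−1}, h_0, h_{‖} ∈ (0,1] with (α_0 + β_0·h_0) + (α_{‖} + β_{‖}·h_{‖}) + (α_{−1} + β_{−1}·h_{−1})/h_0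 ≤ E′·ε′, then ‖d_0 f‖_w ≥ (E″/(h_0^{−1}·h_{−1}^{−1} + h_{‖}^{−1}))·dist_w(f, Z^0(X,𝓕)) for every f ∈ C^0(X,𝓕), and ‖f‖_w ≥ E‴·(E·ε − α_{−1})/β_{−1} for every f ∈ Z^0(X,𝓕) not lying in B^0(X,𝓕). -/

import Mathlib

open scoped Classical

noncomputable section

namespace FK

variable {V : Type*} [Fintype V] [PartialOrder V]

/-- The set of faces of dimension `i`. -/
def faces (dim : V → ℤ) (i : ℤ) : Finset V :=
  Finset.univ.filter fun x => dim x = i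

/-- The set of faces of dimension `i` lying above `z`. -/
def facesAbove (dim : V → ℤ) (i : ℤ) (z : V) : Finset V :=
  Finset.univ.filter fun x => dim x = i ∧ z ≤ x

/-- The set of faces of dimension `i` lying below `y`. -/
def facesBelow (dim : V → ℤ) (i : ℤ) (y : V) : Finset V :=
  Finset.univ.filter fun x => dim x = i ∧ x ≤ y

/-- The set of faces of dimension `j` lying between `x` and `z`. -/
def facesBetween (dim : V → ℤ) (j : ℤ) (x z : V) : Finset V :=
  Finset.univ.filter fun y => dim y = j ∧ x ≤ y ∧ y ≤ z

/-- Total weight of a finite set of faces. -/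
def wsum (w : V → ℝ) (A : Finset V) : ℝ := ∑ x ∈ A, w x

/-- `(V, dim)` is a `d`-poset with least face `bot` (of dimension `-1`). -/
structure IsDPoset (dim : V → ℤ) (d : ℤ) (bot : V) : Prop where
  dim_strictMono : ∀ ⦃x y : V⦄, x < y → dim x < dim y
  dim_covBy : ∀ ⦃x y : V⦄, x ⋖ y → dim y = dim x + 1
  bot_le : ∀ x : V, bot ≤ x
  dim_bot : dim bot = -1
  pure : ∀ x : V, ∃ y : V, x ≤ y ∧ dim y = d

/-- Graded poset axioms. -/
structure IsGraded (dim : V → ℤ) : Prop where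
  dim_strictMono : ∀ ⦃x y : V⦄, x < y → dim x < dim y
  dim_covBy : ∀ ⦃x y : V⦄, x ⋖ y → dim y = dim x + 1

/-- `w` is a proper weight function on the `d`-poset `(V, dim)`. -/
structure IsProperWeight (dim : V → ℤ) (d : ℤ) (w : V → ℝ) : Prop where
  pos : ∀ x : V, 0 < w x
  total : wsum w (faces dim d) = 1
  eq : ∀ x : V, w x = ∑ y ∈ facesAbove dim d x, w y / ((facesBelow dim (dim x) y).card : ℝ)

/-- The weight function induced on the link of `z`. -/
def linkWeight (dim : V → ℤ) (d : ℤ) (w : V → ℝ) (z x : V) : ℝ :=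
  (wsum w (facesAbove dim d z))⁻¹ *
    ∑ y ∈ facesAbove dim d x, w y / ((facesBetween dim (dim x) z y).card : ℝ)

/-- An `R`-orientation on the graded poset `(V, dim)`. -/
structure IsOrientation (R : Type*) [CommRing R] (dim : V → ℤ) (sgn : V → V → R) : Prop where
  isUnit : ∀ ⦃x y : V⦄, x ⋖ y → IsUnit (sgn y x)
  sum_eq_zero : ∀ ⦃x z : V⦄, x ≤ z → dim z = dim x + 2 →
    ∑ y ∈ Finset.univ.filter (fun y => x < y ∧ y < z), sgn z y * sgn y x = 0

/-- The restriction maps of a sheaf compose. -/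
structure IsSheafRes (R : Type*) [CommRing R] (F : V → Type*)
    [∀ x, AddCommGroup (F x)] [∀ x, Module R (F x)]
    (res : ∀ x y : V, x ≤ y → (F x →ₗ[R] F y)) : Prop where
  refl : ∀ x : V, res x x le_rfl = LinearMap.id
  trans : ∀ ⦃x y z : V⦄ (hxy : x ≤ y) (hyz : y ≤ z),
    (res y z hyz).comp (res x y hxy) = res x z (hxy.trans hyz)

/-- `i`-cochains with coefficients in the sheaf `F`. -/
abbrev Cochain (dim : V → ℤ) (F : V → Type*) (i : ℤ) : Type _ :=
  ∀ x : {x : V // dim x = i}, F x.1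

/-- Cochains on the link of `u`, indexed by the ambient dimension `i`
(i.e. link-dimension `i - dim u - 1`). -/
abbrev LCochain (dim : V → ℤ) (F : V → Type*) (u : V) (i : ℤ) : Type _ :=
  ∀ x : {x : V // dim x = i ∧ u ≤ x}, F x.1

section Sheaf

variable {R : Type*} [CommRing R] (dim : V → ℤ) (F : V → Type*)
  [∀ x, AddCommGroup (F x)] [∀ x, Module R (F x)]
  (sgn : V → V → R) (res : ∀ x y : V, x ≤ y → (F x →ₗ[R] F y))
  (w : V → ℝ) (d : ℤ)

/-- The coboundary map, from dimension `i` to dimension `j` (intended: `j = i + 1`). -/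
def coboundary (i j : ℤ) (f : Cochain dim F i) : Cochain dim F j := fun y =>
  ∑ x : {x : V // dim x = i},
    if h : x.1 ≤ y.1 then sgn y.1 x.1 • res x.1 y.1 h (f x) else 0

/-- The coboundary map on the link of `u`. -/
def lcoboundary (u : V) (i j : ℤ) (f : LCochain dim F u i) : LCochain dim F u j := fun y =>
  ∑ x : {x : V // dim x = i ∧ u ≤ x},
    if h : x.1 ≤ y.1 then sgn y.1 x.1 • res x.1 y.1 h (f x) else 0

/-- Weighted Hamming norm of a cochain. -/
def cnorm {i : ℤ} (f : Cochain dim F i) : ℝ :=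
  ∑ x : {x : V // dim x = i}, if f x ≠ 0 then w x.1 else 0

/-- Norm of a cochain on the link of `u`, w.r.t. the weight induced on the link. -/
def lnorm (u : V) {i : ℤ} (f : LCochain dim F u i) : ℝ :=
  ∑ x : {x : V // dim x = i ∧ u ≤ x}, if f x ≠ 0 then linkWeight dim d w u x.1 else 0

/-- `i`-cocycles. -/
def cocycles (i : ℤ) : Set (Cochain dim F i) :=
  {f | coboundary dim F sgn res i (i + 1) f = 0}

/-- `i`-coboundaries. -/
def coboundariesSet (i : ℤ) : Set (Cochain dim F i) :=
  {f | ∃ g : Cochain dim F (i - 1), coboundary dim F sgn res (i - 1) i g = f}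

/-- Weighted Hamming distance from a cochain to a set of cochains. -/
def distTo {i : ℤ} (f : Cochain dim F i) (S : Set (Cochain dim F i)) : ℝ :=
  sInf ((fun g => cnorm dim F w (f - g)) '' S)

/-- Coboundaries on the link of `u`, at ambient dimension `i`. -/
def lcoboundariesSet (u : V) (i : ℤ) : Set (LCochain dim F u i) :=
  {f | ∃ g : LCochain dim F u (i - 1), lcoboundary dim F sgn res u (i - 1) i g = f}

/-- `cbe_{i - dim u - 1}(X_u, w_u, F_u) ≥ ε`, expressed at ambient dimension `i`. -/
def LinkCbeGe (u : V) (i : ℤ) (ε : ℝ) : Prop :=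
  ∀ f : LCochain dim F u i,
    ε * sInf ((fun g => lnorm dim F w d u (f - g)) '' lcoboundariesSet dim F sgn res u i)
      ≤ lnorm dim F w d u (lcoboundary dim F sgn res u i (i + 1) f)

/-- Extension of a link cochain by zero. -/
def extendByZero (u : V) {i : ℤ} (b : LCochain dim F u i) : Cochain dim F i := fun x =>
  if h : u ≤ x.1 then b ⟨x.1, x.2, h⟩ else 0

/-- `f` is mock `q`-locally minimal at `u`. -/
def MockMinAt (q : ℝ) (m : ℤ) (f : Cochain dim F m) (u : V) : Prop :=
  ∀ g : LCochain dim F u (m - 1),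
    cnorm dim F w f ≤
      cnorm dim F w (f + extendByZero dim F u (lcoboundary dim F sgn res u (m - 1) m g)) +
        q * w u

/-- `f` is mock `q`-locally minimal. -/
def MockMin (q : ℝ) (m : ℤ) (f : Cochain dim F m) : Prop :=
  ∀ u : V, 0 ≤ dim u → dim u ≤ m → MockMinAt dim F sgn res w q m f u

end Sheaf

/-- `ugr(X_u, w_u)` is an `(α, β)`-skeleton expander. -/
def LinkUgrSkeletonExpander (dim : V → ℤ) (d : ℤ) (w : V → ℝ) (u : V) (α β : ℝ) : Prop :=
  ∀ A ⊆ facesAbove dim (dim u + 1) u,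
    wsum (linkWeight dim d w u)
        ((facesAbove dim (dim u + 2) u).filter fun e =>
          ∃ x ∈ A, ∃ y ∈ A, x ≠ y ∧ x ≤ e ∧ y ≤ e)
      ≤ α * wsum (linkWeight dim d w u) A + β * wsum (linkWeight dim d w u) A ^ 2

/-- `ugr(X, w)` is an `(α, β)`-skeleton expander. -/
def UgrSkeletonExpander (dim : V → ℤ) (w : V → ℝ) (α β : ℝ) : Prop :=
  ∀ A ⊆ faces dim 0,
    wsum w ((faces dim 1).filter fun e => ∃ x ∈ A, ∃ y ∈ A, x ≠ y ∧ x ≤ e ∧ y ≤ e)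
      ≤ α * wsum w A + β * wsum w A ^ 2

/-- `NI^{1,1,2}(X, w)` is an `(α, β)`-skeleton expander. -/
def NI112SkeletonExpander (dim : V → ℤ) (w : V → ℝ) (bot : V) (α β : ℝ) : Prop :=
  ∀ A ⊆ faces dim 1,
    wsum w ((faces dim 2).filter fun z =>
        ∃ x ∈ A, ∃ y ∈ A, x ≠ y ∧ x ≤ z ∧ y ≤ z ∧ ∀ t : V, t ≤ x → t ≤ y → t = bot)
      ≤ α * wsum w A + β * wsum w A ^ 2

/-- Pairs of an `i`-face and a `k`-face that are incident. -/
def incidentPairs (dim : V → ℤ) (i k : ℤ) : Finset (V × V) :=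
  Finset.univ.filter fun p => dim p.1 = i ∧ dim p.2 = k ∧ p.1 ≤ p.2

/-- `F^max_{i,j,k}(X)`. -/
def Fmax (dim : V → ℤ) (i j k : ℤ) : ℕ :=
  (incidentPairs dim i k).sup fun p => (facesBetween dim j p.1 p.2).card

/-- `F^min_{i,j,k}(X)`. -/
def Fmin (dim : V → ℤ) (i j k : ℤ) : ℕ :=
  if h : (incidentPairs dim i k).Nonempty then
    ((incidentPairs dim i k).image fun p => (facesBetween dim j p.1 p.2).card).min'
      (h.image _)
  else 0

end FK

/-!
Given a cochain `f` in dimension `0`, replace it by the cochain `f'` minimising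
`‖d f'‖ + q * ‖f - f'‖`. Then `q * dist(f, Z⁰) ≤ ‖d f‖` as soon as `g = d f'` vanishes, and by
minimality the `1`-cocycle `g` cannot be improved at a vertex `v` by more than `q * w v`.

Let `A` be the support of `g`, supposed small but nonempty. Call a vertex heavy if a large part of
its link lies in `A`. Since `g` is a cocycle, a triangle on which the coboundary of a restriction
of `g` to a link is nonzero must contain a further edge of `A`. Expansion in the links of edges
thus puts each edge of `A` in many triangles with a second edge of `A`, and at a heavy vertex,
where mock minimality bounds the distance of `g` from the local coboundaries, expansion in the
link produces many triangles with an edge of `A` through the vertex and another one avoiding it.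
Altogether the triangles with two disjoint edges in `A`, with two edges in `A` meeting at a light
vertex, or with an edge joining two heavy vertices carry weight proportional to that of `A`. The
three skeleton expansion hypotheses say that they carry far less, so `g = 0`.

For a nonzero `0`-cocycle the same argument one dimension lower needs no minimality: each vertex
of its support lies on many edges with both endpoints in the support, contradicting expansion of
the underlying graph unless the support is large.
-/

namespace FK

section Dimension

variable {V : Type*} [PartialOrder V] {dim : V → ℤ} {d : ℤ} {bot : V}

lemma IsDPoset.dim_mono (hP : IsDPoset dim d bot) : Monotone dim :=
  StrictMono.monotone fun _ _ h => hP.dim_strictMono h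

lemma IsDPoset.neg_one_le_dim (hP : IsDPoset dim d bot) (x : V) : -1 ≤ dim x :=
  hP.dim_bot ▸ hP.dim_mono (hP.bot_le x)

lemma IsDPoset.eq_of_le_of_dim_le (hP : IsDPoset dim d bot) {x y : V} (hxy : x ≤ y)
    (h : dim y ≤ dim x) : x = y :=
  hxy.eq_of_not_lt fun hlt => (hP.dim_strictMono hlt).not_ge h

lemma IsDPoset.exists_between [Finite V] (hP : IsDPoset dim d bot) {x z : V} (hxz : x ≤ z) {j : ℤ}
    (hxj : dim x ≤ j) (hjz : j ≤ dim z) : ∃ y, x ≤ y ∧ y ≤ z ∧ dim y = j := by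
  induction j, hxj using Int.leInduction with
  | base => exact ⟨x, le_rfl, hxz, rfl⟩
  | succ j _ ih =>
    obtain ⟨y, hxy, hyz, rfl⟩ := ih (by omega)
    have hlt : y < z := hyz.lt_of_ne (by rintro rfl; omega)
    obtain ⟨c, hyc, hcz⟩ := exists_covBy_le_of_lt hlt
    exact ⟨c, hxy.trans hyc.le, hcz, hP.dim_covBy hyc⟩

lemma IsDPoset.exists_vertex_le [Finite V] (hP : IsDPoset dim d bot) {x : V} (hx : x ≠ bot) :
    ∃ v, dim v = 0 ∧ v ≤ x := by
  have hlt := hP.dim_strictMono ((hP.bot_le x).lt_of_ne hx.symm)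
  have hbot := hP.dim_bot
  obtain ⟨v, -, hvx, hv⟩ := hP.exists_between (hP.bot_le x) (j := 0) (by omega) (by omega)
  exact ⟨v, hv, hvx⟩

lemma IsDPoset.exists_common_vertex [Finite V] (hP : IsDPoset dim d bot) {x y : V}
    (h : ¬ ∀ t : V, t ≤ x → t ≤ y → t = bot) : ∃ v, dim v = 0 ∧ v ≤ x ∧ v ≤ y := by
  push Not at h
  obtain ⟨t, htx, hty, ht⟩ := h
  obtain ⟨v, hv, hvt⟩ := hP.exists_vertex_le ht
  exact ⟨v, hv, hvt.trans htx, hvt.trans hty⟩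

end Dimension

section Poset

variable {V : Type*} [Fintype V] [PartialOrder V] {dim : V → ℤ} {d : ℤ} {bot : V}

@[simp]
lemma mem_faces {V : Type*} [Fintype V] {dim : V → ℤ} {i : ℤ} {x : V} :
    x ∈ faces dim i ↔ dim x = i := by
  simp [faces]

@[simp]
lemma mem_facesAbove {i : ℤ} {x z : V} : x ∈ facesAbove dim i z ↔ dim x = i ∧ z ≤ x := by
  simp [facesAbove]

@[simp]
lemma mem_facesBelow {i : ℤ} {x y : V} : x ∈ facesBelow dim i y ↔ dim x = i ∧ x ≤ y := by
  simp [facesBelow]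

@[simp]
lemma mem_facesBetween {j : ℤ} {x y z : V} :
    y ∈ facesBetween dim j x z ↔ dim y = j ∧ x ≤ y ∧ y ≤ z := by
  simp [facesBetween]

@[simp]
lemma mem_incidentPairs {i k : ℤ} {p : V × V} :
    p ∈ incidentPairs dim i k ↔ dim p.1 = i ∧ dim p.2 = k ∧ p.1 ≤ p.2 := by
  simp [incidentPairs]

lemma IsDPoset.facesBetween_bot (hP : IsDPoset dim d bot) (j : ℤ) (z : V) :
    facesBetween dim j bot z = facesBelow dim j z := by
  ext y
  simp [hP.bot_le y]

lemma IsDPoset.facesBetween_self (hP : IsDPoset dim d bot) {x z : V} (hxz : x ≤ z) :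
    facesBetween dim (dim x) x z = {x} := by
  ext y
  rw [mem_facesBetween, Finset.mem_singleton]
  constructor
  · rintro ⟨hy, hxy, -⟩
    exact (hP.eq_of_le_of_dim_le hxy hy.le).symm
  · rintro rfl
    exact ⟨rfl, le_rfl, hxz⟩

lemma card_facesBetween_le_Fmax {x z : V} (hxz : x ≤ z) (j : ℤ) :
    (facesBetween dim j x z).card ≤ Fmax dim (dim x) j (dim z) :=
  Finset.le_sup (f := fun p : V × V => (facesBetween dim j p.1 p.2).card)
    (mem_incidentPairs.2 ⟨rfl, rfl, hxz⟩ : (x, z) ∈ incidentPairs dim (dim x) (dim z))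

lemma Fmin_le_card_facesBetween {x z : V} (hxz : x ≤ z) (j : ℤ) :
    Fmin dim (dim x) j (dim z) ≤ (facesBetween dim j x z).card := by
  have hmem : (x, z) ∈ incidentPairs dim (dim x) (dim z) := mem_incidentPairs.2 ⟨rfl, rfl, hxz⟩
  rw [Fmin, dif_pos ⟨_, hmem⟩]
  exact Finset.min'_le _ _
    (Finset.mem_image_of_mem (fun p : V × V => (facesBetween dim j p.1 p.2).card) hmem)

lemma IsDPoset.card_facesBelow_le_Fmax (hP : IsDPoset dim d bot) (j : ℤ) (z : V) :
    (facesBelow dim j z).card ≤ Fmax dim (-1) j (dim z) := by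
  rw [← hP.facesBetween_bot, ← hP.dim_bot]
  exact card_facesBetween_le_Fmax (hP.bot_le z) j

lemma IsDPoset.Fmin_le_card_facesBelow (hP : IsDPoset dim d bot) (j : ℤ) (z : V) :
    Fmin dim (-1) j (dim z) ≤ (facesBelow dim j z).card := by
  rw [← hP.facesBetween_bot, ← hP.dim_bot]
  exact Fmin_le_card_facesBetween (hP.bot_le z) j

lemma IsDPoset.Fmin_pos (hP : IsDPoset dim d bot) {x z : V} (hxz : x ≤ z) {j : ℤ}
    (hxj : dim x ≤ j) (hjz : j ≤ dim z) : 0 < Fmin dim (dim x) j (dim z) := by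
  have hmem : (x, z) ∈ incidentPairs dim (dim x) (dim z) := mem_incidentPairs.2 ⟨rfl, rfl, hxz⟩
  rw [Fmin, dif_pos ⟨_, hmem⟩, Finset.lt_min'_iff]
  intro c hc
  obtain ⟨⟨x', z'⟩, hp, rfl⟩ := Finset.mem_image.1 hc
  obtain ⟨hx', hz', hxz'⟩ := mem_incidentPairs.1 hp
  obtain ⟨y, hxy, hyz, hy⟩ := hP.exists_between hxz' (j := j) (by omega) (by omega)
  exact Finset.card_pos.2 ⟨y, mem_facesBetween.2 ⟨hy, hxy, hyz⟩⟩

lemma IsDPoset.Fmax_mono_right (hP : IsDPoset dim d bot) {k l : ℤ} (hkl : k ≤ l) (hld : l ≤ d)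
    (i j : ℤ) : Fmax dim i j k ≤ Fmax dim i j l := by
  refine Finset.sup_le fun ⟨x, y⟩ hp => ?_
  obtain ⟨hx, hy, hxy⟩ := mem_incidentPairs.1 hp
  obtain ⟨t, hyt, ht⟩ := hP.pure y
  dsimp only at hx hy hxy ⊢
  obtain ⟨z, hyz, -, hz⟩ := hP.exists_between hyt (j := l) (by omega) (by omega)
  calc (facesBetween dim j x y).card
      ≤ (facesBetween dim j x z).card := Finset.card_le_card fun u hu => by
        obtain ⟨hu, hxu, huy⟩ := mem_facesBetween.1 hu
        exact mem_facesBetween.2 ⟨hu, hxu, huy.trans hyz⟩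
    _ ≤ Fmax dim i j l := hx ▸ hz ▸ card_facesBetween_le_Fmax (hxy.trans hyz) j

lemma IsDPoset.Fmin_mul_Fmin_le (hP : IsDPoset dim d bot) (i j : ℤ) (z : V) :
    Fmin dim (-1) i (dim z) * Fmin dim i j (dim z) ≤
      Fmax dim (-1) j (dim z) * Fmax dim (-1) i j := by
  have hcount : (facesBelow dim i z).card * Fmin dim i j (dim z) ≤
      (facesBelow dim j z).card * Fmax dim (-1) i j := by
    refine Finset.card_mul_le_card_mul (· ≤ ·) (fun x hx => ?_) fun y hy => ?_
    · obtain ⟨rfl, hxz⟩ := mem_facesBelow.1 hx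
      refine (Fmin_le_card_facesBetween hxz j).trans (Finset.card_le_card fun y hy => ?_)
      obtain ⟨hyj, hxy, hyz⟩ := mem_facesBetween.1 hy
      simp [Finset.bipartiteAbove, hyj, hxy, hyz]
    · obtain ⟨rfl, -⟩ := mem_facesBelow.1 hy
      refine (Finset.card_le_card fun x hx => ?_).trans (hP.card_facesBelow_le_Fmax i y)
      obtain ⟨hx, hxy⟩ := Finset.mem_filter.1 hx
      exact mem_facesBelow.2 ⟨(mem_facesBelow.1 hx).1, hxy⟩
  calc Fmin dim (-1) i (dim z) * Fmin dim i j (dim z)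
      ≤ (facesBelow dim i z).card * Fmin dim i j (dim z) :=
        Nat.mul_le_mul_right _ (hP.Fmin_le_card_facesBelow i z)
    _ ≤ (facesBelow dim j z).card * Fmax dim (-1) i j := hcount
    _ ≤ Fmax dim (-1) j (dim z) * Fmax dim (-1) i j :=
        Nat.mul_le_mul_right _ (hP.card_facesBelow_le_Fmax j z)

lemma IsDPoset.Fmin_le_Fmax_mul_Fmax (hP : IsDPoset dim d bot) {i j : ℤ} (hi : -1 ≤ i)
    (hij : i ≤ j) (z : V) :
    Fmin dim (-1) j (dim z) ≤ Fmax dim (-1) i (dim z) * Fmax dim i j (dim z) := by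
  have hcount : (facesBelow dim j z).card * 1 ≤
      (facesBelow dim i z).card * Fmax dim i j (dim z) := by
    refine Finset.card_mul_le_card_mul (fun y x => x ≤ y) (fun y hy => ?_) fun x hx => ?_
    · obtain ⟨rfl, hyz⟩ := mem_facesBelow.1 hy
      obtain ⟨x, -, hxy, hx⟩ := hP.exists_between (hP.bot_le y) (hP.dim_bot.symm ▸ hi) hij
      exact Finset.card_pos.2 ⟨x, by simp [Finset.bipartiteAbove, hx, hxy, hxy.trans hyz]⟩
    · obtain ⟨rfl, hxz⟩ := mem_facesBelow.1 hx
      refine (Finset.card_le_card fun y hy => ?_).trans (card_facesBetween_le_Fmax hxz j)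
      obtain ⟨hy, hxy⟩ := Finset.mem_filter.1 hy
      obtain ⟨hy, hyz⟩ := mem_facesBelow.1 hy
      exact mem_facesBetween.2 ⟨hy, hxy, hyz⟩
  calc Fmin dim (-1) j (dim z)
      ≤ (facesBelow dim j z).card * 1 := by
        simpa only [mul_one] using hP.Fmin_le_card_facesBelow j z
    _ ≤ (facesBelow dim i z).card * Fmax dim i j (dim z) := hcount
    _ ≤ Fmax dim (-1) i (dim z) * Fmax dim i j (dim z) :=
        Nat.mul_le_mul_right _ (hP.card_facesBelow_le_Fmax i z)

end Poset

section WeightSum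

variable {V : Type*} {w : V → ℝ}

lemma wsum_nonneg (hw : ∀ x, 0 ≤ w x) (A : Finset V) : 0 ≤ wsum w A :=
  Finset.sum_nonneg fun x _ => hw x

lemma wsum_mono (hw : ∀ x, 0 ≤ w x) {A B : Finset V} (hAB : A ⊆ B) : wsum w A ≤ wsum w B :=
  Finset.sum_le_sum_of_subset_of_nonneg hAB fun x _ _ => hw x

lemma wsum_union_le (hw : ∀ x, 0 ≤ w x) (A B : Finset V) :
    wsum w (A ∪ B) ≤ wsum w A + wsum w B := by
  rw [wsum, wsum, wsum, ← Finset.sum_union_inter]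
  exact le_add_of_nonneg_right (wsum_nonneg hw _)

lemma wsum_biUnion_le {ι : Type*} (hw : ∀ x, 0 ≤ w x) (S : Finset ι) (G : ι → Finset V) :
    wsum w (S.biUnion G) ≤ ∑ u ∈ S, wsum w (G u) := by
  induction S using Finset.induction_on with
  | empty => simp [wsum]
  | insert u S hu ih =>
    rw [Finset.biUnion_insert, Finset.sum_insert hu]
    exact (wsum_union_le hw _ _).trans (by gcongr)

lemma wsum_filter_add_wsum_filter_not (A : Finset V) (p : V → Prop) [DecidablePred p]
    [∀ x, Decidable (¬ p x)] :
    wsum w (A.filter p) + wsum w (A.filter fun x => ¬ p x) = wsum w A :=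
  Finset.sum_filter_add_sum_filter_not A p w

lemma sum_wsum_filter_le {ι : Type*} (hw : ∀ x, 0 ≤ w x) {S : Finset ι} {T : Finset V}
    {r : ι → V → Prop} {N : ℝ} (hN : ∀ y ∈ T, ((S.filter fun x => r x y).card : ℝ) ≤ N) :
    ∑ x ∈ S, wsum w (T.filter fun y => r x y) ≤ N * wsum w T := by
  simp_rw [wsum, Finset.sum_filter]
  rw [Finset.sum_comm, Finset.mul_sum]
  refine Finset.sum_le_sum fun y hy => ?_
  rw [← Finset.sum_filter, Finset.sum_const, nsmul_eq_mul]
  exact mul_le_mul_of_nonneg_right (hN y hy) (hw y)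

lemma sum_div_card_filter_le {ι : Type*} (hw : ∀ x, 0 ≤ w x) (S : Finset ι) (T : Finset V)
    (r : ι → V → Prop) :
    ∑ x ∈ S, ∑ y ∈ T.filter (fun y => r x y), w y / ((S.filter fun x => r x y).card : ℝ) ≤
      wsum w T := by
  simp_rw [wsum, Finset.sum_filter]
  rw [Finset.sum_comm]
  refine Finset.sum_le_sum fun y _ => ?_
  rw [← Finset.sum_filter, Finset.sum_const, nsmul_eq_mul, mul_div_left_comm]
  exact mul_le_of_le_one_right (hw y) (div_self_le_one _)

lemma mul_sum_div_le_wsum (hw : ∀ x, 0 ≤ w x) {A : Finset V} {c : V → ℕ} {m : ℕ}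
    (hm : ∀ x ∈ A, m ≤ c x) : m * ∑ x ∈ A, w x / c x ≤ wsum w A := by
  rw [wsum, Finset.mul_sum]
  refine Finset.sum_le_sum fun x hx => ?_
  rw [mul_div_left_comm]
  exact mul_le_of_le_one_right (hw x)
    (div_le_one_of_le₀ (Nat.cast_le.2 (hm x hx)) (Nat.cast_nonneg _))

lemma wsum_le_mul_sum_div (hw : ∀ x, 0 ≤ w x) {A : Finset V} {c : V → ℕ} {M : ℕ}
    (hc : ∀ x ∈ A, 0 < c x) (hM : ∀ x ∈ A, c x ≤ M) : wsum w A ≤ M * ∑ x ∈ A, w x / c x := by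
  rw [wsum, Finset.mul_sum]
  refine Finset.sum_le_sum fun x hx => ?_
  rw [mul_div_left_comm]
  exact le_mul_of_one_le_right (hw x)
    ((one_le_div (Nat.cast_pos.2 (hc x hx))).2 (Nat.cast_le.2 (hM x hx)))

end WeightSum

section Weights

variable {V : Type*} [Fintype V] [PartialOrder V] {dim : V → ℤ} {d : ℤ} {bot : V} {w : V → ℝ}

lemma IsDPoset.wsum_facesAbove_pos (hP : IsDPoset dim d bot) (hw : ∀ x, 0 < w x) (y : V) :
    0 < wsum w (facesAbove dim d y) := by
  obtain ⟨z, hyz, hz⟩ := hP.pure y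
  exact Finset.sum_pos (fun x _ => hw x) ⟨z, mem_facesAbove.2 ⟨hz, hyz⟩⟩

lemma IsProperWeight.Fmin_mul_le (hw : IsProperWeight dim d w) (hP : IsDPoset dim d bot) (y : V) :
    Fmin dim (-1) (dim y) d * w y ≤ wsum w (facesAbove dim d y) := by
  rw [hw.eq y]
  refine mul_sum_div_le_wsum (fun x => (hw.pos x).le) fun z hz => ?_
  rw [← (mem_facesAbove.1 hz).1]
  exact hP.Fmin_le_card_facesBelow _ z

lemma IsProperWeight.le_Fmax_mul (hw : IsProperWeight dim d w) (hP : IsDPoset dim d bot) (y : V) :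
    wsum w (facesAbove dim d y) ≤ Fmax dim (-1) (dim y) d * w y := by
  rw [hw.eq y]
  refine wsum_le_mul_sum_div (fun x => (hw.pos x).le) (fun z hz => ?_) fun z hz => ?_
  · exact Finset.card_pos.2 ⟨y, mem_facesBelow.2 ⟨rfl, (mem_facesAbove.1 hz).2⟩⟩
  · rw [← (mem_facesAbove.1 hz).1]
    exact hP.card_facesBelow_le_Fmax _ z

lemma IsProperWeight.wsum_faces_le_one (hw : IsProperWeight dim d w) (j : ℤ) :
    wsum w (faces dim j) ≤ 1 := by
  rw [← hw.total]
  refine le_trans (le_of_eq ?_)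
    (sum_div_card_filter_le (fun x => (hw.pos x).le) (faces dim j) (faces dim d) (· ≤ ·))
  refine Finset.sum_congr rfl fun y hy => ?_
  rw [hw.eq y, mem_faces.1 hy]
  refine Finset.sum_congr (by ext; simp) fun z _ => ?_
  congr 3
  ext
  simp

lemma wsum_mul_linkWeight (hP : IsDPoset dim d bot) (hw : ∀ x, 0 < w x) (x y : V) :
    wsum w (facesAbove dim d x) * linkWeight dim d w x y =
      ∑ z ∈ facesAbove dim d y, w z / ((facesBetween dim (dim y) x z).card : ℝ) :=
  mul_inv_cancel_left₀ (hP.wsum_facesAbove_pos hw x).ne' _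

lemma linkWeight_nonneg (hw : ∀ x, 0 ≤ w x) (x y : V) : 0 ≤ linkWeight dim d w x y :=
  mul_nonneg (inv_nonneg.2 (wsum_nonneg hw _))
    (Finset.sum_nonneg fun z _ => div_nonneg (hw z) (Nat.cast_nonneg _))

lemma linkWeight_self (hP : IsDPoset dim d bot) (hw : ∀ x, 0 < w x) (x : V) :
    linkWeight dim d w x x = 1 := by
  have hW := (hP.wsum_facesAbove_pos hw x).ne'
  refine mul_left_cancel₀ hW ?_
  rw [wsum_mul_linkWeight hP hw, mul_one]
  refine Finset.sum_congr rfl fun z hz => ?_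
  rw [hP.facesBetween_self (mem_facesAbove.1 hz).2, Finset.card_singleton, Nat.cast_one, div_one]

lemma wsum_linkWeight_le_one (hP : IsDPoset dim d bot) (hw : ∀ x, 0 < w x) (j : ℤ) (x : V) :
    wsum (linkWeight dim d w x) (facesAbove dim j x) ≤ 1 := by
  refine le_of_mul_le_mul_left ?_ (hP.wsum_facesAbove_pos hw x)
  rw [mul_one]
  refine le_trans (le_of_eq ((Finset.mul_sum ..).trans ?_)) (sum_div_card_filter_le
    (fun x => (hw x).le) (facesAbove dim j x) (facesAbove dim d x) (· ≤ ·))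
  refine Finset.sum_congr rfl fun y hy => ?_
  obtain ⟨rfl, hxy⟩ := mem_facesAbove.1 hy
  rw [wsum_mul_linkWeight hP hw]
  refine Finset.sum_congr ?_ fun z _ => ?_
  · ext z
    simp only [mem_facesAbove, Finset.mem_filter]
    exact ⟨fun ⟨hz, hyz⟩ => ⟨⟨hz, hxy.trans hyz⟩, hyz⟩, fun ⟨⟨hz, _⟩, hyz⟩ => ⟨hz, hyz⟩⟩
  · congr 3
    ext t
    simp only [mem_facesAbove, mem_facesBetween, Finset.mem_filter, and_assoc]

lemma Fmin_mul_linkWeight_le (hP : IsDPoset dim d bot) (hw : ∀ x, 0 < w x) {x y : V}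
    (hxy : x ≤ y) :
    Fmin dim (dim x) (dim y) d * (wsum w (facesAbove dim d x) * linkWeight dim d w x y) ≤
      wsum w (facesAbove dim d y) := by
  rw [wsum_mul_linkWeight hP hw]
  refine mul_sum_div_le_wsum (fun x => (hw x).le) fun z hz => ?_
  obtain ⟨rfl, hyz⟩ := mem_facesAbove.1 hz
  exact Fmin_le_card_facesBetween (hxy.trans hyz) _

lemma le_Fmax_mul_linkWeight (hP : IsDPoset dim d bot) (hw : ∀ x, 0 < w x) {x y : V}
    (hxy : x ≤ y) :
    wsum w (facesAbove dim d y) ≤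
      Fmax dim (dim x) (dim y) d * (wsum w (facesAbove dim d x) * linkWeight dim d w x y) := by
  rw [wsum_mul_linkWeight hP hw]
  refine wsum_le_mul_sum_div (fun x => (hw x).le) (fun z hz => ?_) fun z hz => ?_
  · exact Finset.card_pos.2 ⟨y, mem_facesBetween.2 ⟨rfl, hxy, (mem_facesAbove.1 hz).2⟩⟩
  · obtain ⟨rfl, hyz⟩ := mem_facesAbove.1 hz
    exact card_facesBetween_le_Fmax (hxy.trans hyz) _

/-- The lower irregularity of the `d`-poset is at most `L`, with the quotients `Fmax / Fmin`
cleared of denominators. -/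
def LowerIrregularityLE (dim : V → ℤ) (d : ℤ) (L : ℝ) : Prop :=
  ∀ i j k : ℤ, -1 ≤ i → i ≤ j → j ≤ k → k ≤ d → (Fmax dim i j k : ℝ) ≤ L * Fmin dim i j k

lemma LowerIrregularityLE.Fmax_mul_Fmax_le {L : ℝ} (hirr : LowerIrregularityLE dim d L)
    (hL : 0 ≤ L) {i j : ℤ} (hi : -1 ≤ i) (hij : i ≤ j) (hjd : j ≤ d) :
    (Fmax dim (-1) i d : ℝ) * Fmax dim i j d ≤ L ^ 2 * (Fmin dim (-1) i d * Fmin dim i j d) := by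
  have h₁ := hirr (-1) i d le_rfl hi (hij.trans hjd) le_rfl
  have h₂ := hirr i j d hi hij hjd le_rfl
  calc (Fmax dim (-1) i d : ℝ) * Fmax dim i j d
      ≤ (L * Fmin dim (-1) i d) * (L * Fmin dim i j d) := by gcongr
    _ = _ := by ring

lemma IsProperWeight.mul_linkWeight_le (hw : IsProperWeight dim d w) (hP : IsDPoset dim d bot)
    {L : ℝ} (hirr : LowerIrregularityLE dim d L) (hL : 0 ≤ L) {x y : V} (hxy : x ≤ y) :
    w x * linkWeight dim d w x y ≤ L ^ 3 * w y := by
  obtain ⟨z, hyz, rfl⟩ := hP.pure y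
  have hx := hP.neg_one_le_dim x
  have hij := hP.dim_mono hxy
  have hjd := hP.dim_mono hyz
  have ha : (0 : ℝ) < Fmin dim (-1) (dim x) (dim z) := by
    rw [← hP.dim_bot] at hx ⊢
    exact Nat.cast_pos.2 (hP.Fmin_pos (hP.bot_le z) hx (hij.trans hjd))
  have hc : (0 : ℝ) < Fmin dim (dim x) (dim y) (dim z) :=
    Nat.cast_pos.2 (hP.Fmin_pos (hxy.trans hyz) hij hjd)
  have hlw : 0 ≤ linkWeight dim (dim z) w x y := linkWeight_nonneg (fun x => (hw.pos x).le) x y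
  have hwy := (hw.pos y).le
  have hcount : (Fmin dim (-1) (dim y) (dim z) : ℝ) ≤
      Fmax dim (-1) (dim x) (dim z) * Fmax dim (dim x) (dim y) (dim z) := by
    exact_mod_cast hP.Fmin_le_Fmax_mul_Fmax hx hij z
  refine le_of_mul_le_mul_left ?_ (mul_pos ha hc)
  set a : ℝ := (↑(Fmin dim (-1) (dim x) (dim z)) : ℝ)
  set b : ℝ := (↑(Fmin dim (-1) (dim y) (dim z)) : ℝ)
  set c : ℝ := (↑(Fmin dim (dim x) (dim y) (dim z)) : ℝ)
  calc a * c * (w x * linkWeight dim (dim z) w x y)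
      = c * ((a * w x) * linkWeight dim (dim z) w x y) := by ring
    _ ≤ c * (wsum w (facesAbove dim (dim z) x) * linkWeight dim (dim z) w x y) := by
        gcongr
        exact hw.Fmin_mul_le hP x
    _ ≤ wsum w (facesAbove dim (dim z) y) := Fmin_mul_linkWeight_le hP hw.pos hxy
    _ ≤ Fmax dim (-1) (dim y) (dim z) * w y := hw.le_Fmax_mul hP y
    _ ≤ (L * b) * w y := by
        gcongr
        exact hirr _ _ _ le_rfl (hx.trans hij) hjd le_rfl
    _ ≤ (L * (L ^ 2 * (a * c))) * w y := by
        gcongr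
        exact hcount.trans (hirr.Fmax_mul_Fmax_le hL hx hij hjd)
    _ = a * c * (L ^ 3 * w y) := by ring

lemma IsProperWeight.le_mul_linkWeight (hw : IsProperWeight dim d w) (hP : IsDPoset dim d bot)
    {L : ℝ} (hirr : LowerIrregularityLE dim d L) (hL : 0 ≤ L) {x y : V} (hxy : x ≤ y) :
    w y ≤ L ^ 3 * Fmax dim (-1) (dim x) (dim y) * (w x * linkWeight dim d w x y) := by
  obtain ⟨z, hyz, rfl⟩ := hP.pure y
  have hx := hP.neg_one_le_dim x
  have hij := hP.dim_mono hxy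
  have hjd := hP.dim_mono hyz
  have hb : (0 : ℝ) < Fmin dim (-1) (dim y) (dim z) := by
    rw [← hP.dim_bot] at hx ⊢
    exact Nat.cast_pos.2 (hP.Fmin_pos (hP.bot_le z) (hx.trans hij) hjd)
  have hlw : 0 ≤ linkWeight dim (dim z) w x y := linkWeight_nonneg (fun x => (hw.pos x).le) x y
  have hwx := (hw.pos x).le
  have hcount : (Fmin dim (-1) (dim x) (dim z) : ℝ) * Fmin dim (dim x) (dim y) (dim z) ≤
      Fmax dim (-1) (dim y) (dim z) * Fmax dim (-1) (dim x) (dim y) := by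
    exact_mod_cast hP.Fmin_mul_Fmin_le (dim x) (dim y) z
  refine le_of_mul_le_mul_left ?_ hb
  set b : ℝ := (↑(Fmin dim (-1) (dim y) (dim z)) : ℝ)
  set N : ℝ := (↑(Fmax dim (-1) (dim x) (dim y)) : ℝ)
  calc b * w y
      ≤ wsum w (facesAbove dim (dim z) y) := hw.Fmin_mul_le hP y
    _ ≤ Fmax dim (dim x) (dim y) (dim z) *
          (wsum w (facesAbove dim (dim z) x) * linkWeight dim (dim z) w x y) :=
        le_Fmax_mul_linkWeight hP hw.pos hxy
    _ ≤ Fmax dim (dim x) (dim y) (dim z) *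
          ((Fmax dim (-1) (dim x) (dim z) * w x) * linkWeight dim (dim z) w x y) := by
        gcongr
        exact hw.le_Fmax_mul hP x
    _ = (Fmax dim (-1) (dim x) (dim z) * Fmax dim (dim x) (dim y) (dim z)) *
          (w x * linkWeight dim (dim z) w x y) := by ring
    _ ≤ (L ^ 2 * (Fmax dim (-1) (dim y) (dim z) * N)) *
          (w x * linkWeight dim (dim z) w x y) :=
        mul_le_mul_of_nonneg_right
          ((hirr.Fmax_mul_Fmax_le hL hx hij hjd).trans (by gcongr)) (by positivity)
    _ ≤ (L ^ 2 * ((L * b) * N)) * (w x * linkWeight dim (dim z) w x y) := by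
        gcongr
        exact hirr _ _ _ le_rfl (hx.trans hij) hjd le_rfl
    _ = b * (L ^ 3 * N * (w x * linkWeight dim (dim z) w x y)) := by ring

/-- Uniform control of the local structure in dimensions at most `2`: up to a factor `C`, the
weight of a face `y` is the product of the weight of any of its faces `x` with the weight of `y`
in the link of `x`, and `y` has at most `C` faces of any given smaller dimension. This is the only
form in which irregularity and the numbers `Fmax` enter the expansion argument. -/
structure IsLocallyBounded (dim : V → ℤ) (d : ℤ) (w : V → ℝ) (C : ℝ) : Prop where
  pos : ∀ x, 0 < w x
  one_le : 1 ≤ C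
  weight_le : ∀ ⦃x y : V⦄, 0 ≤ dim x → x ≤ y → dim x < dim y → dim y ≤ 2 →
    w y ≤ C * (w x * linkWeight dim d w x y)
  mul_linkWeight_le : ∀ ⦃x y : V⦄, 0 ≤ dim x → x ≤ y → dim x < dim y → dim y ≤ 2 →
    w x * linkWeight dim d w x y ≤ C * w y
  card_facesBelow_le : ∀ ⦃i : ℤ⦄ ⦃y : V⦄, 0 ≤ i → i < dim y → dim y ≤ 2 →
    ((facesBelow dim i y).card : ℝ) ≤ C

lemma IsProperWeight.isLocallyBounded (hw : IsProperWeight dim d w) (hP : IsDPoset dim d bot)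
    (hd : 2 ≤ d) {L N : ℝ} (hL : 1 ≤ L) (hN : 1 ≤ N) (hirr : LowerIrregularityLE dim d L)
    (h02 : Fmax dim (-1) 0 2 ≤ N) (h12 : Fmax dim (-1) 1 2 ≤ N) :
    IsLocallyBounded dim d w (L ^ 3 * N) := by
  have hL0 : 0 ≤ L := zero_le_one.trans hL
  have hL3 : 1 ≤ L ^ 3 := one_le_pow₀ hL
  have hFmax {i j : ℤ} (hi : 0 ≤ i) (hij : i < j) (hj : j ≤ 2) : (Fmax dim (-1) i j : ℝ) ≤ N := by
    have hmono : (Fmax dim (-1) i j : ℝ) ≤ Fmax dim (-1) i 2 :=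
      Nat.cast_le.2 (hP.Fmax_mono_right hj hd (-1) i)
    obtain rfl | rfl : i = 0 ∨ i = 1 := by omega
    exacts [hmono.trans h02, hmono.trans h12]
  refine ⟨hw.pos, one_le_mul_of_one_le_of_one_le hL3 hN, fun x y hx hxy hlt hy => ?_,
    fun x y _ hxy _ _ => ?_, fun i y hi hiy hy => ?_⟩
  · have hlw : 0 ≤ linkWeight dim d w x y := linkWeight_nonneg (fun x => (hw.pos x).le) x y
    have hwx := (hw.pos x).le
    refine (hw.le_mul_linkWeight hP hirr hL0 hxy).trans ?_
    gcongr
    exact hFmax hx hlt hy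
  · have hwy := (hw.pos y).le
    refine (hw.mul_linkWeight_le hP hirr hL0 hxy).trans ?_
    gcongr
    exact le_mul_of_one_le_right (by positivity) hN
  · exact (Nat.cast_le.2 (hP.card_facesBelow_le_Fmax i y)).trans
      ((hFmax hi hiy hy).trans (le_mul_of_one_le_left (by positivity) hL3))

end Weights

section Combinatorics

variable {V : Type*} [Fintype V] [PartialOrder V] {dim : V → ℤ} {d : ℤ} {bot : V} {w : V → ℝ}
  {A : Finset V} {C h : ℝ}

/-- The faces in `A` lying above `x`. -/
def star {V : Type*} [PartialOrder V] (A : Finset V) (x : V) : Finset V :=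
  A.filter fun y => x ≤ y

/-- The `j`-faces lying above two distinct faces in `A`. For `A` a set of vertices and `j = 1`
these are the edges of the skeleton induced on `A`. -/
def spanned (dim : V → ℤ) (j : ℤ) (A : Finset V) : Finset V :=
  (faces dim j).filter fun z => ∃ x ∈ A, ∃ y ∈ A, x ≠ y ∧ x ≤ z ∧ y ≤ z

/-- The triangles lying above two disjoint faces in `A`: the hyperedges counted by
`NI112SkeletonExpander`. -/
def disjointlySpanned (dim : V → ℤ) (bot : V) (A : Finset V) : Finset V :=
  (faces dim 2).filter fun z =>
    ∃ x ∈ A, ∃ y ∈ A, x ≠ y ∧ x ≤ z ∧ y ≤ z ∧ ∀ t : V, t ≤ x → t ≤ y → t = bot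

/-- The vertices in whose link the set `A` has weight more than `h`. -/
def heavy (dim : V → ℤ) (d : ℤ) (w : V → ℝ) (h : ℝ) (A : Finset V) : Finset V :=
  (faces dim 0).filter fun v => h < wsum (linkWeight dim d w v) (star A v)

/-- The vertices in whose link the set `A` has weight at most `h`. -/
def light (dim : V → ℤ) (d : ℤ) (w : V → ℝ) (h : ℝ) (A : Finset V) : Finset V :=
  (faces dim 0).filter fun v => wsum (linkWeight dim d w v) (star A v) ≤ h

/-- The triangles at `v` having both an edge in `A` through `v` and an edge in `A` avoiding `v`. -/
def crossing (dim : V → ℤ) (A : Finset V) (v : V) : Finset V :=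
  (facesAbove dim 2 v).filter fun t => (∃ e ∈ A, v ≤ e ∧ e ≤ t) ∧ ∃ e ∈ A, ¬ v ≤ e ∧ e ≤ t

/-- The triangles whose total weight the three skeleton expansion hypotheses control: those with
two disjoint edges in `A`, those with two edges in `A` through a common light vertex, and those
with an edge joining two heavy vertices. -/
def exceptional (dim : V → ℤ) (d : ℤ) (w : V → ℝ) (bot : V) (h : ℝ) (A : Finset V) : Finset V :=
  disjointlySpanned dim bot A ∪
    ((light dim d w h A).biUnion fun v => spanned dim 2 (star A v)) ∪
    (spanned dim 1 (heavy dim d w h A)).biUnion (facesAbove dim 2)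

@[simp]
lemma mem_star {V : Type*} [PartialOrder V] {A : Finset V} {x y : V} :
    y ∈ star A x ↔ y ∈ A ∧ x ≤ y :=
  Finset.mem_filter

lemma star_subset_facesAbove {i : ℤ} (hA : A ⊆ faces dim i) (x : V) :
    star A x ⊆ facesAbove dim i x := fun _ hy =>
  mem_facesAbove.2 ⟨mem_faces.1 (hA (mem_star.1 hy).1), (mem_star.1 hy).2⟩

lemma spanned_subset_faces (j : ℤ) : spanned dim j A ⊆ faces dim j :=
  Finset.filter_subset _ _

lemma spanned_star_eq (j : ℤ) (x : V) :
    spanned dim j (star A x) = (facesAbove dim j x).filter fun z =>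
      ∃ y ∈ star A x, ∃ y' ∈ star A x, y ≠ y' ∧ y ≤ z ∧ y' ≤ z := by
  ext z
  simp only [spanned, Finset.mem_filter, mem_faces, mem_facesAbove, and_congr_left_iff]
  rintro ⟨y, hy, -, -, -, hyz, -⟩
  exact (and_iff_left ((mem_star.1 hy).2.trans hyz)).symm

lemma exceptional_subset_faces : exceptional dim d w bot h A ⊆ faces dim 2 := by
  refine Finset.union_subset (Finset.union_subset (Finset.filter_subset _ _) ?_) ?_
  · exact Finset.biUnion_subset.2 fun v _ => spanned_subset_faces 2
  · exact Finset.biUnion_subset.2 fun e _ t ht => mem_faces.2 (mem_facesAbove.1 ht).1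

lemma mem_exceptional_or_exists_mem_heavy (hP : IsDPoset dim d bot) {x y t : V} (ht : dim t = 2)
    (hx : x ∈ A) (hy : y ∈ A) (hxy : x ≠ y) (hxt : x ≤ t) (hyt : y ≤ t) :
    t ∈ exceptional dim d w bot h A ∨ ∃ v ∈ heavy dim d w h A, v ≤ x ∧ v ≤ y := by
  by_cases hdisj : ∀ s : V, s ≤ x → s ≤ y → s = bot
  · refine .inl (Finset.mem_union_left _ (Finset.mem_union_left _ ?_))
    exact Finset.mem_filter.2 ⟨mem_faces.2 ht, x, hx, y, hy, hxy, hxt, hyt, hdisj⟩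
  obtain ⟨v, hv, hvx, hvy⟩ := hP.exists_common_vertex hdisj
  by_cases hheavy : h < wsum (linkWeight dim d w v) (star A v)
  · exact .inr ⟨v, Finset.mem_filter.2 ⟨mem_faces.2 hv, hheavy⟩, hvx, hvy⟩
  · refine .inl (Finset.mem_union_left _ (Finset.mem_union_right _ (Finset.mem_biUnion.2
      ⟨v, Finset.mem_filter.2 ⟨mem_faces.2 hv, not_lt.1 hheavy⟩, Finset.mem_filter.2
        ⟨mem_faces.2 ht, x, mem_star.2 ⟨hx, hvx⟩, y, mem_star.2 ⟨hy, hvy⟩, hxy, hxt, hyt⟩⟩)))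

lemma crossing_subset_exceptional (hP : IsDPoset dim d bot) (hA : A ⊆ faces dim 1) {v : V}
    (hv : v ∈ heavy dim d w h A) : crossing dim A v ⊆ exceptional dim d w bot h A := by
  intro t ht
  obtain ⟨ht, ⟨e, he, hve, het⟩, e', he', hve', het'⟩ := Finset.mem_filter.1 ht
  have ht2 := (mem_facesAbove.1 ht).1
  have hne : e ≠ e' := by
    rintro rfl
    exact hve' hve
  obtain hexc | ⟨u, hu, hue, hue'⟩ :=
    mem_exceptional_or_exists_mem_heavy hP ht2 he he' hne het het'
  · exact hexc
  have huv : u ≠ v := by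
    rintro rfl
    exact hve' hue'
  exact Finset.mem_union_right _ (Finset.mem_biUnion.2 ⟨e,
    Finset.mem_filter.2 ⟨hA he, u, hu, v, hv, huv, hue, hve⟩, mem_facesAbove.2 ⟨ht2, het⟩⟩)

lemma star_spanned_subset_exceptional (hP : IsDPoset dim d bot) {e : V} (he : e ∈ A)
    (hlight : ∀ v ∈ heavy dim d w h A, ¬ v ≤ e) :
    star (spanned dim 2 A) e ⊆ star (exceptional dim d w bot h A) e := by
  intro t ht
  obtain ⟨ht, het⟩ := mem_star.1 ht
  obtain ⟨ht2, x, hx, y, hy, hxy, hxt, hyt⟩ := Finset.mem_filter.1 ht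
  obtain ⟨e', he', hne, het'⟩ : ∃ e' ∈ A, e ≠ e' ∧ e' ≤ t := by
    by_cases hex : e = x
    · exact ⟨y, hy, hex ▸ hxy, hyt⟩
    · exact ⟨x, hx, hex, hxt⟩
  refine mem_star.2 ⟨?_, het⟩
  obtain hexc | ⟨v, hv, hve, -⟩ :=
    mem_exceptional_or_exists_mem_heavy hP (mem_faces.1 ht2) he he' hne het het'
  · exact hexc
  · exact absurd hve (hlight v hv)

namespace IsLocallyBounded

variable (hC : IsLocallyBounded dim d w C)
include hC

lemma weight_nonneg (x : V) : 0 ≤ w x :=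
  (hC.pos x).le

lemma const_pos : 0 < C :=
  zero_lt_one.trans_le hC.one_le

lemma wsum_le {j : ℤ} {x : V} (hx : 0 ≤ dim x) (hxj : dim x < j) (hj : j ≤ 2) {S : Finset V}
    (hS : S ⊆ facesAbove dim j x) : wsum w S ≤ C * (w x * wsum (linkWeight dim d w x) S) := by
  simp_rw [wsum, Finset.mul_sum]
  refine Finset.sum_le_sum fun y hy => ?_
  obtain ⟨rfl, hxy⟩ := mem_facesAbove.1 (hS hy)
  exact hC.weight_le hx hxy hxj hj

lemma mul_wsum_linkWeight_le {j : ℤ} {x : V} (hx : 0 ≤ dim x) (hxj : dim x < j) (hj : j ≤ 2)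
    {S : Finset V} (hS : S ⊆ facesAbove dim j x) :
    w x * wsum (linkWeight dim d w x) S ≤ C * wsum w S := by
  simp_rw [wsum, Finset.mul_sum]
  refine Finset.sum_le_sum fun y hy => ?_
  obtain ⟨rfl, hxy⟩ := mem_facesAbove.1 (hS hy)
  exact hC.mul_linkWeight_le hx hxy hxj hj

lemma sum_mul_wsum_linkWeight_star_le {i j : ℤ} (hi : 0 ≤ i) (hij : i < j) (hj : j ≤ 2)
    {S T : Finset V} (hS : S ⊆ faces dim i) (hT : T ⊆ faces dim j) :
    ∑ x ∈ S, w x * wsum (linkWeight dim d w x) (star T x) ≤ C ^ 2 * wsum w T := by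
  have hcard : ∀ y ∈ T, ((S.filter fun x => x ≤ y).card : ℝ) ≤ C := fun y hy => by
    obtain rfl := mem_faces.1 (hT hy)
    refine le_trans (Nat.cast_le.2 (Finset.card_le_card fun x hx => ?_))
      (hC.card_facesBelow_le hi hij hj)
    obtain ⟨hx, hxy⟩ := Finset.mem_filter.1 hx
    exact mem_facesBelow.2 ⟨mem_faces.1 (hS hx), hxy⟩
  calc ∑ x ∈ S, w x * wsum (linkWeight dim d w x) (star T x)
      ≤ ∑ x ∈ S, C * wsum w (star T x) := Finset.sum_le_sum fun x hx => by
        obtain rfl := mem_faces.1 (hS hx)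
        exact hC.mul_wsum_linkWeight_le hi hij hj (star_subset_facesAbove hT x)
    _ = C * ∑ x ∈ S, wsum w (star T x) := (Finset.mul_sum ..).symm
    _ ≤ C * (C * wsum w T) :=
        mul_le_mul_of_nonneg_left (sum_wsum_filter_le hC.weight_nonneg hcard) hC.const_pos.le
    _ = C ^ 2 * wsum w T := by ring

lemma mul_wsum_heavy_le (hA : A ⊆ faces dim 1) :
    h * wsum w (heavy dim d w h A) ≤ C ^ 2 * wsum w A := by
  refine le_trans ?_ (hC.sum_mul_wsum_linkWeight_star_le le_rfl zero_lt_one one_le_two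
    (Finset.filter_subset _ _ : heavy dim d w h A ⊆ faces dim 0) hA)
  rw [wsum, Finset.mul_sum]
  refine Finset.sum_le_sum fun v hv => ?_
  rw [mul_comm]
  exact mul_le_mul_of_nonneg_left (Finset.mem_filter.1 hv).2.le (hC.weight_nonneg v)

end IsLocallyBounded

lemma mul_add_mul_sq_le {α β x h : ℝ} (hβ : 0 ≤ β) (hx : 0 ≤ x) (hxh : x ≤ h) :
    α * x + β * x ^ 2 ≤ (α + β * h) * x := by
  rw [add_mul, mul_assoc β, sq]
  gcongr

lemma wsum_spanned_star_le {α β : ℝ} {v : V} (hw : ∀ x, 0 ≤ w x) (hA : A ⊆ faces dim 1)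
    (hβ : 0 ≤ β) (hexp : LinkUgrSkeletonExpander dim d w v α β) (hv : v ∈ light dim d w h A) :
    wsum (linkWeight dim d w v) (spanned dim 2 (star A v)) ≤
      (α + β * h) * wsum (linkWeight dim d w v) (star A v) := by
  obtain ⟨hv0, hlight⟩ := Finset.mem_filter.1 hv
  have hexp := hexp (star A v)
  rw [mem_faces.1 hv0, zero_add, zero_add, ← spanned_star_eq] at hexp
  exact (hexp (star_subset_facesAbove hA v)).trans
    (mul_add_mul_sq_le hβ (wsum_nonneg (linkWeight_nonneg hw v) _) hlight)

namespace IsLocallyBounded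

variable (hC : IsLocallyBounded dim d w C)
include hC

lemma wsum_biUnion_spanned_star_le (hA : A ⊆ faces dim 1) {α β : ℝ} (hα : 0 ≤ α) (hβ : 0 ≤ β)
    (hh : 0 ≤ h) (hexp : ∀ v, dim v = 0 → LinkUgrSkeletonExpander dim d w v α β) :
    wsum w ((light dim d w h A).biUnion fun v => spanned dim 2 (star A v)) ≤
      C ^ 3 * (α + β * h) * wsum w A := by
  have hC0 := hC.const_pos
  have hlight : light dim d w h A ⊆ faces dim 0 := Finset.filter_subset _ _
  calc _ ≤ ∑ v ∈ light dim d w h A, wsum w (spanned dim 2 (star A v)) :=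
        wsum_biUnion_le hC.weight_nonneg _ _
    _ ≤ ∑ v ∈ light dim d w h A,
          C * (α + β * h) * (w v * wsum (linkWeight dim d w v) (star A v)) := by
        refine Finset.sum_le_sum fun v hv => ?_
        have hv0 := mem_faces.1 (hlight hv)
        have hwv := hC.weight_nonneg v
        refine (hC.wsum_le hv0.ge (by omega) le_rfl
          (spanned_star_eq (dim := dim) 2 v ▸ Finset.filter_subset _ _)).trans ?_
        calc C * (w v * wsum (linkWeight dim d w v) (spanned dim 2 (star A v)))
            ≤ C * (w v * ((α + β * h) * wsum (linkWeight dim d w v) (star A v))) := by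
              gcongr
              exact wsum_spanned_star_le hC.weight_nonneg hA hβ (hexp v hv0) hv
          _ = _ := by ring
    _ = C * (α + β * h) *
          ∑ v ∈ light dim d w h A, w v * wsum (linkWeight dim d w v) (star A v) :=
        (Finset.mul_sum ..).symm
    _ ≤ C * (α + β * h) * (C ^ 2 * wsum w A) := by
        gcongr
        exact hC.sum_mul_wsum_linkWeight_star_le le_rfl zero_lt_one one_le_two hlight hA
    _ = C ^ 3 * (α + β * h) * wsum w A := by ring

lemma wsum_biUnion_facesAbove_le (hP : IsDPoset dim d bot) {S : Finset V}
    (hS : S ⊆ faces dim 1) : wsum w (S.biUnion (facesAbove dim 2)) ≤ C * wsum w S := by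
  refine (wsum_biUnion_le hC.weight_nonneg _ _).trans ?_
  rw [wsum, Finset.mul_sum]
  refine Finset.sum_le_sum fun e he => ?_
  have he1 := mem_faces.1 (hS he)
  refine (hC.wsum_le (by omega) (by omega) le_rfl subset_rfl).trans ?_
  refine mul_le_mul_of_nonneg_left ?_ hC.const_pos.le
  exact mul_le_of_le_one_right (hC.weight_nonneg e) (wsum_linkWeight_le_one hP hC.pos 2 e)

lemma wsum_biUnion_spanned_heavy_le (hP : IsDPoset dim d bot) (hA : A ⊆ faces dim 1)
    {α β h' : ℝ} (hα : 0 ≤ α) (hβ : 0 ≤ β) (hh : 0 < h) (hh' : 0 ≤ h')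
    (hexp : UgrSkeletonExpander dim w α β) (hsmall : C ^ 2 * wsum w A ≤ h * h') :
    wsum w ((spanned dim 1 (heavy dim d w h A)).biUnion (facesAbove dim 2)) ≤
      C ^ 3 * ((α + β * h') / h) * wsum w A := by
  have hC0 := hC.const_pos
  have hheavy : h * wsum w (heavy dim d w h A) ≤ C ^ 2 * wsum w A := hC.mul_wsum_heavy_le hA
  calc wsum w ((spanned dim 1 (heavy dim d w h A)).biUnion (facesAbove dim 2))
      ≤ C * wsum w (spanned dim 1 (heavy dim d w h A)) :=
        hC.wsum_biUnion_facesAbove_le hP (spanned_subset_faces 1)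
    _ ≤ C * ((α + β * h') * wsum w (heavy dim d w h A)) := by
        refine mul_le_mul_of_nonneg_left ?_ hC0.le
        exact (hexp (heavy dim d w h A) (Finset.filter_subset _ _)).trans (mul_add_mul_sq_le hβ
          (wsum_nonneg hC.weight_nonneg _) (le_of_mul_le_mul_left (hheavy.trans hsmall) hh))
    _ ≤ C * ((α + β * h') * (C ^ 2 * wsum w A / h)) := by
        gcongr
        rwa [le_div_iff₀' hh]
    _ = C ^ 3 * ((α + β * h') / h) * wsum w A := by ring

lemma wsum_disjointlySpanned_le (hA : A ⊆ faces dim 1) {α β h' : ℝ} (hα : 0 ≤ α) (hβ : 0 ≤ β)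
    (hexp : NI112SkeletonExpander dim w bot α β) (hsmall : wsum w A ≤ h') :
    wsum w (disjointlySpanned dim bot A) ≤ C ^ 3 * (α + β * h') * wsum w A := by
  have hwA := wsum_nonneg hC.weight_nonneg A
  have hh' := hwA.trans hsmall
  calc wsum w (disjointlySpanned dim bot A)
      ≤ (α + β * h') * wsum w A := (hexp A hA).trans (mul_add_mul_sq_le hβ hwA hsmall)
    _ ≤ C ^ 3 * ((α + β * h') * wsum w A) :=
        le_mul_of_one_le_left (by positivity) (one_le_pow₀ hC.one_le)
    _ = C ^ 3 * (α + β * h') * wsum w A := by ring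

lemma wsum_exceptional_le (hP : IsDPoset dim d bot) (hA : A ⊆ faces dim 1)
    {α0 β0 αm1 βm1 αpar βpar h0 hm1 hpar : ℝ} (hα0 : 0 ≤ α0) (hβ0 : 0 ≤ β0) (hαm1 : 0 ≤ αm1)
    (hβm1 : 0 ≤ βm1) (hαpar : 0 ≤ αpar) (hβpar : 0 ≤ βpar) (hh0 : 0 < h0) (hhm1 : 0 ≤ hm1)
    (hexp0 : ∀ v, dim v = 0 → LinkUgrSkeletonExpander dim d w v α0 β0)
    (hexpm1 : UgrSkeletonExpander dim w αm1 βm1)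
    (hexppar : NI112SkeletonExpander dim w bot αpar βpar)
    (hsmall : C ^ 2 * wsum w A ≤ h0 * hm1) (hsmallpar : wsum w A ≤ hpar) :
    wsum w (exceptional dim d w bot h0 A) ≤
      C ^ 3 * ((α0 + β0 * h0) + (αpar + βpar * hpar) + (αm1 + βm1 * hm1) / h0) * wsum w A := by
  have hpar' := hC.wsum_disjointlySpanned_le hA hαpar hβpar hexppar hsmallpar
  have hlight := hC.wsum_biUnion_spanned_star_le hA hα0 hβ0 hh0.le hexp0
  have hheavy := hC.wsum_biUnion_spanned_heavy_le hP hA hαm1 hβm1 hh0 hhm1 hexpm1 hsmall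
  refine (wsum_union_le hC.weight_nonneg _ _).trans
    ((add_le_add (wsum_union_le hC.weight_nonneg _ _) le_rfl).trans ?_)
  linarith

lemma mul_wsum_lightEdges_le (hP : IsDPoset dim d bot) (hA : A ⊆ faces dim 1) {ε : ℝ}
    (hedge : ∀ e ∈ A, ε ≤ wsum (linkWeight dim d w e) (star (spanned dim 2 A) e)) :
    ε * wsum w (A.filter fun e => ¬ ∃ v ∈ heavy dim d w h A, v ≤ e) ≤
      C ^ 2 * wsum w (exceptional dim d w bot h A) := by
  refine le_trans ?_ (hC.sum_mul_wsum_linkWeight_star_le zero_le_one one_lt_two le_rfl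
    ((Finset.filter_subset (fun e => ¬ ∃ v ∈ heavy dim d w h A, v ≤ e) A).trans hA)
    exceptional_subset_faces)
  rw [wsum, Finset.mul_sum]
  refine Finset.sum_le_sum fun e he => ?_
  obtain ⟨he, hlight⟩ := Finset.mem_filter.1 he
  rw [mul_comm]
  refine mul_le_mul_of_nonneg_left ((hedge e he).trans ?_) (hC.weight_nonneg e)
  exact wsum_mono (linkWeight_nonneg hC.weight_nonneg e)
    (star_spanned_subset_exceptional hP he fun v hv hve => hlight ⟨v, hv, hve⟩)

lemma mul_wsum_heavyEdges_le (hP : IsDPoset dim d bot) (hA : A ⊆ faces dim 1) {ε K : ℝ}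
    (hε : 0 ≤ ε) (hK : 0 ≤ K)
    (hvertex : ∀ v ∈ heavy dim d w h A, ε * wsum (linkWeight dim d w v) (star A v) ≤
      K * wsum (linkWeight dim d w v) (crossing dim A v)) :
    ε * wsum w (A.filter fun e => ∃ v ∈ heavy dim d w h A, v ≤ e) ≤
      C ^ 3 * K * wsum w (exceptional dim d w bot h A) := by
  have hC0 := hC.const_pos
  have hheavy : heavy dim d w h A ⊆ faces dim 0 := Finset.filter_subset _ _
  have hcover : (A.filter fun e => ∃ v ∈ heavy dim d w h A, v ≤ e) ⊆
      (heavy dim d w h A).biUnion (star A) := fun e he => by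
    obtain ⟨he, v, hv, hve⟩ := Finset.mem_filter.1 he
    exact Finset.mem_biUnion.2 ⟨v, hv, mem_star.2 ⟨he, hve⟩⟩
  calc _ ≤ ε * ∑ v ∈ heavy dim d w h A, wsum w (star A v) := by
        gcongr
        exact (wsum_mono hC.weight_nonneg hcover).trans (wsum_biUnion_le hC.weight_nonneg _ _)
    _ = ∑ v ∈ heavy dim d w h A, ε * wsum w (star A v) := Finset.mul_sum ..
    _ ≤ ∑ v ∈ heavy dim d w h A, C * K * (w v * wsum (linkWeight dim d w v)
          (star (exceptional dim d w bot h A) v)) := Finset.sum_le_sum fun v hv => by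
        have hv0 := mem_faces.1 (hheavy hv)
        have hwv := hC.weight_nonneg v
        have hcross : crossing dim A v ⊆ star (exceptional dim d w bot h A) v := fun t ht =>
          mem_star.2 ⟨crossing_subset_exceptional hP hA hv ht,
            (mem_facesAbove.1 (Finset.mem_filter.1 ht).1).2⟩
        calc ε * wsum w (star A v)
            ≤ ε * (C * (w v * wsum (linkWeight dim d w v) (star A v))) := by
              gcongr
              exact hC.wsum_le hv0.ge (by omega) one_le_two (star_subset_facesAbove hA v)
          _ = C * (w v * (ε * wsum (linkWeight dim d w v) (star A v))) := by ring
          _ ≤ C * (w v * (K * wsum (linkWeight dim d w v)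
                (star (exceptional dim d w bot h A) v))) := by
              refine mul_le_mul_of_nonneg_left (mul_le_mul_of_nonneg_left ?_ hwv) hC0.le
              exact (hvertex v hv).trans (mul_le_mul_of_nonneg_left
                (wsum_mono (linkWeight_nonneg hC.weight_nonneg v) hcross) hK)
          _ = _ := by ring
    _ = C * K * ∑ v ∈ heavy dim d w h A, w v * wsum (linkWeight dim d w v)
          (star (exceptional dim d w bot h A) v) := (Finset.mul_sum ..).symm
    _ ≤ C * K * (C ^ 2 * wsum w (exceptional dim d w bot h A)) := by
        gcongr
        exact hC.sum_mul_wsum_linkWeight_star_le le_rfl zero_lt_two le_rfl hheavy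
          exceptional_subset_faces
    _ = C ^ 3 * K * wsum w (exceptional dim d w bot h A) := by ring

lemma mul_wsum_le_exceptional (hP : IsDPoset dim d bot) (hA : A ⊆ faces dim 1) {ε K : ℝ}
    (hε : 0 ≤ ε) (hK : 0 ≤ K)
    (hedge : ∀ e ∈ A, ε ≤ wsum (linkWeight dim d w e) (star (spanned dim 2 A) e))
    (hvertex : ∀ v ∈ heavy dim d w h A, ε * wsum (linkWeight dim d w v) (star A v) ≤
      K * wsum (linkWeight dim d w v) (crossing dim A v)) :
    ε * wsum w A ≤ (C ^ 3 * K + C ^ 2) * wsum w (exceptional dim d w bot h A) := by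
  have hheavy := hC.mul_wsum_heavyEdges_le hP hA hε hK hvertex
  have hlight := hC.mul_wsum_lightEdges_le (h := h) hP hA hedge
  have hsplit := wsum_filter_add_wsum_filter_not (w := w) A fun e => ∃ v ∈ heavy dim d w h A, v ≤ e
  calc ε * wsum w A
      = ε * wsum w (A.filter fun e => ∃ v ∈ heavy dim d w h A, v ≤ e) +
          ε * wsum w (A.filter fun e => ¬ ∃ v ∈ heavy dim d w h A, v ≤ e) := by
        rw [← hsplit, mul_add]
    _ ≤ C ^ 3 * K * wsum w (exceptional dim d w bot h A) +
          C ^ 2 * wsum w (exceptional dim d w bot h A) := add_le_add hheavy hlight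
    _ = _ := (add_mul ..).symm

end IsLocallyBounded

end Combinatorics

section SupportSum

variable {V : Type*} [Fintype V] {p : V → Prop} {G : {x : V // p x} → Type*} [∀ x, Zero (G x)]

/-- The support of a cochain, as a set of faces. The predicate `p` describes the faces on which
the cochain is defined, so that cochains on the poset and on its links are treated alike. -/
def supp (f : ∀ x, G x) : Finset V :=
  Finset.univ.filter fun y => ∃ h : p y, f ⟨y, h⟩ ≠ 0

@[simp]
lemma mem_supp {f : ∀ x, G x} {y : V} : y ∈ supp f ↔ ∃ h : p y, f ⟨y, h⟩ ≠ 0 := by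
  simp [supp]

lemma supp_eq_empty_iff {f : ∀ x, G x} : supp f = ∅ ↔ f = 0 := by
  simp [Finset.eq_empty_iff_forall_notMem, funext_iff]

lemma sum_ite_eq_wsum_supp [Fintype {x // p x}] (w : V → ℝ) (f : ∀ x, G x) :
    (∑ x : {x : V // p x}, if f x ≠ 0 then w x.1 else 0) = wsum w (supp f) := by
  rw [← Finset.sum_filter]
  refine Finset.sum_bij (fun x _ => x.1) (fun x hx => ?_) (fun x _ y _ h => Subtype.ext h)
    (fun y hy => ?_) fun x _ => rfl
  · exact mem_supp.2 ⟨x.2, (Finset.mem_filter.1 hx).2⟩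
  · obtain ⟨h, hf⟩ := mem_supp.1 hy
    exact ⟨⟨y, h⟩, Finset.mem_filter.2 ⟨Finset.mem_univ _, hf⟩, rfl⟩

end SupportSum

section Coboundary

variable {V : Type*} [Fintype V] [PartialOrder V] {R : Type*} [CommRing R] {dim : V → ℤ}
  {F : V → Type*} [∀ x, AddCommGroup (F x)] [∀ x, Module R (F x)] {sgn : V → V → R}
  {res : ∀ x y : V, x ≤ y → (F x →ₗ[R] F y)} {i j k : ℤ} {u : V}

lemma supp_subset_faces {V : Type*} [Fintype V] {dim : V → ℤ} {F : V → Type*}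
    [∀ x, AddCommGroup (F x)] {i : ℤ} (f : Cochain dim F i) :
    supp f ⊆ faces dim i := fun _ hx =>
  mem_faces.2 (mem_supp.1 hx).1

lemma supp_subset_facesAbove {F : V → Type*} [∀ x, AddCommGroup (F x)] (f : LCochain dim F u i) :
    supp f ⊆ facesAbove dim i u := fun _ hx =>
  mem_facesAbove.2 (mem_supp.1 hx).1

/-- The restriction of a cochain to the link of `u`. -/
def linkRestrict {V : Type*} [PartialOrder V] {dim : V → ℤ} {F : V → Type*} {i : ℤ} (u : V)
    (f : Cochain dim F i) : LCochain dim F u i := fun x =>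
  f ⟨x.1, x.2.1⟩

lemma linkRestrict_extendByZero {V : Type*} [PartialOrder V] {dim : V → ℤ} {F : V → Type*}
    [∀ x, AddCommGroup (F x)] {i : ℤ} {u : V} (b : LCochain dim F u i) :
    linkRestrict u (extendByZero dim F u b) = b := by
  funext x
  exact dif_pos x.2.2

lemma extendByZero_apply_of_not_le {V : Type*} [PartialOrder V] {dim : V → ℤ} {F : V → Type*}
    [∀ x, AddCommGroup (F x)] {i : ℤ} {u : V} (b : LCochain dim F u i) {x : V} (hx : dim x = i)
    (hux : ¬ u ≤ x) : extendByZero dim F u b ⟨x, hx⟩ = 0 :=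
  dif_neg hux

lemma coboundary_add (f g : Cochain dim F i) :
    coboundary dim F sgn res i j (f + g) =
      coboundary dim F sgn res i j f + coboundary dim F sgn res i j g := by
  funext y
  rw [Pi.add_apply, coboundary, coboundary, coboundary, ← Finset.sum_add_distrib]
  refine Finset.sum_congr rfl fun x _ => ?_
  split_ifs <;> simp

lemma coboundary_zero : coboundary dim F sgn res i j 0 = 0 := by
  funext y
  refine Finset.sum_eq_zero fun x _ => ?_
  split_ifs <;> simp

lemma lcoboundary_neg (f : LCochain dim F u i) :
    lcoboundary dim F sgn res u i j (-f) = -lcoboundary dim F sgn res u i j f := by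
  funext y
  rw [Pi.neg_apply, lcoboundary, lcoboundary, ← Finset.sum_neg_distrib]
  refine Finset.sum_congr rfl fun x _ => ?_
  split_ifs <;> simp

lemma exists_mem_supp_le_of_sum_ne_zero {p : V → Prop} [Fintype {x // p x}]
    {f : ∀ x : {x // p x}, F x.1} {y : V}
    (h : (∑ x : {x : V // p x}, if h : x.1 ≤ y then sgn y x • res x y h (f x) else 0) ≠ 0) :
    ∃ x ∈ supp f, x ≤ y := by
  obtain ⟨x, -, hx⟩ := Finset.exists_ne_zero_of_sum_ne_zero h
  obtain ⟨hxy, hx⟩ := dite_ne_right_iff.1 hx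
  refine ⟨x, mem_supp.2 ⟨x.2, fun h0 => hx ?_⟩, hxy⟩
  rw [h0, map_zero, smul_zero]

lemma lcoboundary_linkRestrict_apply {f : Cochain dim F i} {y : V} (hy : dim y = j ∧ u ≤ y)
    (h : ∀ x ∈ supp f, x ≤ y → u ≤ x) :
    lcoboundary dim F sgn res u i j (linkRestrict u f) ⟨y, hy⟩ =
      coboundary dim F sgn res i j f ⟨y, hy.1⟩ := by
  refine Fintype.sum_of_injective
    (fun x : {x : V // dim x = i ∧ u ≤ x} => (⟨x.1, x.2.1⟩ : {x : V // dim x = i}))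
    (fun a b hab => Subtype.ext (Subtype.mk.inj hab)) _ _ ?_ fun _ => rfl
  rintro ⟨x, hx⟩ hxu
  refine dite_eq_right_iff.2 fun hxy => ?_
  have hfx : f ⟨x, hx⟩ = 0 := by
    by_contra hne
    exact hxu ⟨⟨x, hx, h x (mem_supp.2 ⟨hx, hne⟩) hxy⟩, rfl⟩
  rw [hfx, map_zero, smul_zero]

lemma exists_not_le_of_mem_supp_lcoboundary {f : Cochain dim F i}
    (hf : coboundary dim F sgn res i j f = 0) {y : V}
    (hy : y ∈ supp (lcoboundary dim F sgn res u i j (linkRestrict u f))) :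
    ∃ x ∈ supp f, ¬ u ≤ x ∧ x ≤ y := by
  obtain ⟨hy, hne⟩ := mem_supp.1 hy
  contrapose! hne
  rw [lcoboundary_linkRestrict_apply hy fun x hx hxy => not_not.1 fun hux => hne x hx hux hxy, hf]
  rfl

lemma coboundary_extendByZero (b : LCochain dim F u i) :
    coboundary dim F sgn res i j (extendByZero dim F u b) =
      extendByZero dim F u (lcoboundary dim F sgn res u i j b) := by
  have hsupp : ∀ x ∈ supp (extendByZero dim F u b), u ≤ x := fun x hx => by
    obtain ⟨hx, hne⟩ := mem_supp.1 hx
    exact (dite_ne_right_iff.1 hne).1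
  funext ⟨y, hy⟩
  by_cases huy : u ≤ y
  · rw [← lcoboundary_linkRestrict_apply ⟨hy, huy⟩ fun x hx _ => hsupp x hx,
      linkRestrict_extendByZero]
    simp only [extendByZero, dif_pos huy]
  · rw [extendByZero_apply_of_not_le _ hy huy]
    by_contra hne
    obtain ⟨x, hx, hxy⟩ := exists_mem_supp_le_of_sum_ne_zero hne
    exact huy ((hsupp x hx).trans hxy)

lemma IsOrientation.sum_sgn_mul_sgn_eq_zero {d : ℤ} {bot : V} (hs : IsOrientation R dim sgn)
    (hP : IsDPoset dim d bot) {x z : V} (hxz : x ≤ z) (hxj : j = dim x + 1) (hjz : dim z = j + 1) :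
    (∑ y : {y : V // dim y = j}, if x ≤ y.1 ∧ y.1 ≤ z then sgn z y * sgn y x else 0) = 0 := by
  rw [← Finset.sum_filter]
  refine Eq.trans ?_ (hs.sum_eq_zero hxz (by omega))
  refine Finset.sum_bij (fun y _ => y.1) (fun y hy => ?_) (fun _ _ _ _ h => Subtype.ext h)
    (fun y hy => ?_) fun _ _ => rfl
  · obtain ⟨hxy, hyz⟩ := (Finset.mem_filter.1 hy).2
    have := y.2
    refine Finset.mem_filter.2 ⟨Finset.mem_univ _, hxy.lt_of_ne ?_, hyz.lt_of_ne ?_⟩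
    · exact ne_of_apply_ne dim (by omega)
    · exact ne_of_apply_ne dim (by omega)
  · obtain ⟨hxy, hyz⟩ := (Finset.mem_filter.1 hy).2
    have := hP.dim_strictMono hxy
    have := hP.dim_strictMono hyz
    exact ⟨⟨y, by omega⟩, Finset.mem_filter.2 ⟨Finset.mem_univ _, hxy.le, hyz.le⟩, rfl⟩

lemma coboundary_coboundary_apply (hr : IsSheafRes R F res) (f : Cochain dim F i)
    (z : {z : V // dim z = k}) :
    coboundary dim F sgn res j k (coboundary dim F sgn res i j f) z =
      ∑ y : {y : V // dim y = j}, ∑ x : {x : V // dim x = i}, if h : x.1 ≤ z.1 then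
        (if x.1 ≤ y.1 ∧ y.1 ≤ z.1 then sgn z y * sgn y x else 0) • res x z h (f x) else 0 := by
  refine Finset.sum_congr rfl fun y _ => ?_
  by_cases hyz : y.1 ≤ z.1
  · rw [dif_pos hyz, coboundary, map_sum, Finset.smul_sum]
    refine Finset.sum_congr rfl fun x _ => ?_
    by_cases hxy : x.1 ≤ y.1
    · rw [dif_pos hxy, dif_pos (hxy.trans hyz), if_pos ⟨hxy, hyz⟩, map_smul, smul_smul,
        ← hr.trans hxy hyz, LinearMap.comp_apply]
    · simp [hxy]
  · simp [hyz]

lemma coboundary_coboundary {d : ℤ} {bot : V} (hP : IsDPoset dim d bot)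
    (hs : IsOrientation R dim sgn) (hr : IsSheafRes R F res) (hij : j = i + 1) (hjk : k = j + 1)
    (f : Cochain dim F i) : coboundary dim F sgn res j k (coboundary dim F sgn res i j f) = 0 := by
  funext ⟨z, hz⟩
  rw [coboundary_coboundary_apply hr, Finset.sum_comm]
  refine Finset.sum_eq_zero fun x _ => ?_
  by_cases hxz : x.1 ≤ z
  · simp_rw [dif_pos hxz]
    rw [← Finset.sum_smul, hs.sum_sgn_mul_sgn_eq_zero hP hxz (by rw [x.2, hij]) (by rw [hz, hjk]),
      zero_smul]
  · simp [hxz]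

end Coboundary

section Expansion

variable {V : Type*} [Fintype V] [PartialOrder V] {R : Type*} [CommRing R] {dim : V → ℤ} {d : ℤ}
  {bot : V} {w : V → ℝ} {F : V → Type*} [∀ x, AddCommGroup (F x)] [∀ x, Module R (F x)]
  {sgn : V → V → R} {res : ∀ x y : V, x ≤ y → (F x →ₗ[R] F y)} {i m : ℤ} {u v x : V}
  {ε q C : ℝ}

lemma cnorm_eq_wsum_supp {V : Type*} [Fintype V] {dim : V → ℤ} {w : V → ℝ} {F : V → Type*}
    [∀ x, AddCommGroup (F x)] {i : ℤ} (f : Cochain dim F i) :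
    cnorm dim F w f = wsum w (supp f) :=
  sum_ite_eq_wsum_supp w f

lemma lnorm_eq_wsum_supp (f : LCochain dim F u i) :
    lnorm dim F w d u f = wsum (linkWeight dim d w u) (supp f) :=
  sum_ite_eq_wsum_supp (linkWeight dim d w u) f

lemma LinkCbeGe.mul_le_wsum (hcbe : LinkCbeGe dim F sgn res w d u i ε) (hε : 0 ≤ ε)
    {f : LCochain dim F u i} {c : ℝ}
    (hc : ∀ b : LCochain dim F u (i - 1), c ≤
      wsum (linkWeight dim d w u) (supp (f - lcoboundary dim F sgn res u (i - 1) i b))) :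
    ε * c ≤ wsum (linkWeight dim d w u) (supp (lcoboundary dim F sgn res u i (i + 1) f)) := by
  rw [← lnorm_eq_wsum_supp]
  refine (mul_le_mul_of_nonneg_left ?_ hε).trans (hcbe f)
  refine le_csInf ⟨_, _, ⟨0, rfl⟩, rfl⟩ ?_
  rintro _ ⟨_, ⟨b, rfl⟩, rfl⟩
  exact (hc b).trans_eq (lnorm_eq_wsum_supp _).symm

-- In the link of `x` the face `x` plays the role of the empty face, so that `cbe` is here the
-- expansion in dimension `-1`, where there are no nonzero coboundaries.
lemma LinkCbeGe.le_wsum_star_spanned (hcbe : LinkCbeGe dim F sgn res w d x i ε) (hε : 0 ≤ ε)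
    (hP : IsDPoset dim d bot) (hw : ∀ x, 0 < w x) {g : Cochain dim F i}
    (hg : coboundary dim F sgn res i (i + 1) g = 0) (hx : x ∈ supp g) :
    ε ≤ wsum (linkWeight dim d w x) (star (spanned dim (i + 1) (supp g)) x) := by
  obtain ⟨hxi, hgx⟩ := mem_supp.1 hx
  have hnonneg := linkWeight_nonneg (dim := dim) (d := d) (fun y => (hw y).le) x
  have hbdry (b : LCochain dim F x (i - 1)) :
      lcoboundary dim F sgn res x (i - 1) i b ⟨x, hxi, le_rfl⟩ = 0 :=
    Finset.sum_eq_zero fun y _ => absurd (hP.dim_mono y.2.2) (by have := y.2.1; omega)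
  have hself (b : LCochain dim F x (i - 1)) : 1 ≤ wsum (linkWeight dim d w x)
      (supp (linkRestrict x g - lcoboundary dim F sgn res x (i - 1) i b)) := by
    rw [← linkWeight_self hP hw x]
    refine Finset.single_le_sum (f := linkWeight dim d w x) (fun y _ => hnonneg y) ?_
    refine mem_supp.2 ⟨⟨hxi, le_rfl⟩, ?_⟩
    rwa [Pi.sub_apply, hbdry, sub_zero]
  calc ε = ε * 1 := (mul_one ε).symm
    _ ≤ _ := hcbe.mul_le_wsum hε hself
    _ ≤ _ := wsum_mono hnonneg fun y hy => by
      obtain ⟨⟨hyi, hxy⟩, -⟩ := mem_supp.1 hy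
      obtain ⟨x', hx', hxx', hxy'⟩ := exists_not_le_of_mem_supp_lcoboundary hg hy
      have hne : x ≠ x' := fun h => hxx' h.le
      exact mem_star.2
        ⟨Finset.mem_filter.2 ⟨mem_faces.2 hyi, x, hx, x', hx', hne, hxy, hxy'⟩, hxy⟩

lemma MockMinAt.wsum_star_le {g : Cochain dim F m} (hmock : MockMinAt dim F sgn res w q m g u)
    (hw : ∀ x, 0 ≤ w x) (b : LCochain dim F u (m - 1)) :
    wsum w (star (supp g) u) ≤
      wsum w (supp (linkRestrict u g - lcoboundary dim F sgn res u (m - 1) m b)) + q * w u := by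
  set c := lcoboundary dim F sgn res u (m - 1) m b
  have hmock := hmock (-b)
  rw [lcoboundary_neg, cnorm_eq_wsum_supp, cnorm_eq_wsum_supp] at hmock
  have hsupp : supp (g + extendByZero dim F u (-c)) ⊆
      (supp g).filter (fun y => ¬ u ≤ y) ∪ supp (linkRestrict u g - c) := by
    intro y hy
    obtain ⟨hym, hne⟩ := mem_supp.1 hy
    rw [Pi.add_apply] at hne
    by_cases huy : u ≤ y
    · refine Finset.mem_union_right _ (mem_supp.2 ⟨⟨hym, huy⟩, ?_⟩)
      rwa [extendByZero, dif_pos huy, Pi.neg_apply, ← sub_eq_add_neg] at hne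
    · rw [extendByZero_apply_of_not_le _ hym huy, add_zero] at hne
      exact Finset.mem_union_left _ (Finset.mem_filter.2 ⟨mem_supp.2 ⟨hym, hne⟩, huy⟩)
  have hchange := (wsum_mono hw hsupp).trans (wsum_union_le hw _ _)
  have hsplit := wsum_filter_add_wsum_filter_not (w := w) (supp g) fun y => u ≤ y
  rw [star]
  linarith

namespace IsLocallyBounded

variable (hC : IsLocallyBounded dim d w C)
include hC

-- For a face `u` whose star carries much of `g`, the additive error `q * w u` in mock minimality
-- is absorbed, at the cost of a factor `2`.
lemma wsum_linkWeight_star_le (hu : 0 ≤ dim u) (hum : dim u < m) (hm : m ≤ 2)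
    {g : Cochain dim F m} (hmock : MockMinAt dim F sgn res w q m g u)
    (hq : 2 * C * q ≤ wsum (linkWeight dim d w u) (star (supp g) u))
    (b : LCochain dim F u (m - 1)) :
    wsum (linkWeight dim d w u) (star (supp g) u) ≤ 2 * C ^ 2 * wsum (linkWeight dim d w u)
      (supp (linkRestrict u g - lcoboundary dim F sgn res u (m - 1) m b)) := by
  have hC0 := hC.const_pos
  have hwu := hC.pos u
  have hstar := hC.mul_wsum_linkWeight_le hu hum hm (star_subset_facesAbove (supp_subset_faces g) u)
  have hmin := hC.wsum_le hu hum hm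
    (supp_subset_facesAbove (linkRestrict u g - lcoboundary dim F sgn res u (m - 1) m b))
  set a := wsum (linkWeight dim d w u) (star (supp g) u)
  set S := supp (linkRestrict u g - lcoboundary dim F sgn res u (m - 1) m b)
  have habsorb : w u * a ≤ C ^ 2 * (w u * wsum (linkWeight dim d w u) S) + w u * a / 2 := by
    calc w u * a ≤ C * wsum w (star (supp g) u) := hstar
      _ ≤ C * (wsum w S + q * w u) := by
          gcongr
          exact hmock.wsum_star_le hC.weight_nonneg b
      _ ≤ C * (C * (w u * wsum (linkWeight dim d w u) S) + q * w u) := by gcongr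
      _ = C ^ 2 * (w u * wsum (linkWeight dim d w u) S) + w u * (2 * C * q) / 2 := by ring
      _ ≤ _ := by gcongr
  refine le_of_mul_le_mul_left ?_ hwu
  linarith

lemma mul_wsum_star_le_crossing (hv : dim v = 0) {g : Cochain dim F 1}
    (hg : coboundary dim F sgn res 1 (1 + 1) g = 0)
    (hmock : MockMinAt dim F sgn res w q 1 g v) (hcbe : LinkCbeGe dim F sgn res w d v 1 ε)
    (hε : 0 ≤ ε) (hq : 2 * C * q ≤ wsum (linkWeight dim d w v) (star (supp g) v)) :
    ε * wsum (linkWeight dim d w v) (star (supp g) v) ≤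
      2 * C ^ 2 * wsum (linkWeight dim d w v) (crossing dim (supp g) v) := by
  have hC0 := hC.const_pos
  have hlocal (b : LCochain dim F v (1 - 1)) :
      wsum (linkWeight dim d w v) (star (supp g) v) / (2 * C ^ 2) ≤ wsum (linkWeight dim d w v)
        (supp (linkRestrict v g - lcoboundary dim F sgn res v (1 - 1) 1 b)) :=
    div_le_of_le_mul₀ (by positivity) (wsum_nonneg (linkWeight_nonneg hC.weight_nonneg v) _)
      ((hC.wsum_linkWeight_star_le hv.ge (by omega) one_le_two hmock hq b).trans_eq
        (mul_comm _ _))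
  have hcrossing : supp (lcoboundary dim F sgn res v 1 (1 + 1) (linkRestrict v g)) ⊆
      crossing dim (supp g) v := fun t ht => by
    obtain ⟨ht2, hne⟩ := mem_supp.1 ht
    obtain ⟨e, he, het⟩ := exists_mem_supp_le_of_sum_ne_zero hne
    obtain ⟨⟨he1, hve⟩, hge⟩ := mem_supp.1 he
    exact Finset.mem_filter.2 ⟨mem_facesAbove.2 ht2, ⟨e, mem_supp.2 ⟨he1, hge⟩, hve, het⟩,
      exists_not_le_of_mem_supp_lcoboundary hg ht⟩
  have hexpand := (hcbe.mul_le_wsum hε hlocal).trans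
    (wsum_mono (linkWeight_nonneg hC.weight_nonneg v) hcrossing)
  rwa [← mul_div_assoc, div_le_iff₀' (by positivity)] at hexpand

lemma eq_zero_of_wsum_supp_nonpos {g : Cochain dim F i} (hg : wsum w (supp g) ≤ 0) : g = 0 := by
  refine supp_eq_empty_iff.1 (Finset.not_nonempty_iff_eq_empty.1 fun hne => ?_)
  exact hg.not_gt (Finset.sum_pos (fun x _ => hC.pos x) hne)

lemma eq_zero_of_mockMinAt (hP : IsDPoset dim d bot) {g : Cochain dim F 1}
    (hg : coboundary dim F sgn res 1 (1 + 1) g = 0)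
    (hmock : ∀ v, dim v = 0 → MockMinAt dim F sgn res w q 1 g v)
    (hedge : ∀ e, dim e = 1 → LinkCbeGe dim F sgn res w d e 1 ε)
    (hvertex : ∀ v, dim v = 0 → LinkCbeGe dim F sgn res w d v 1 ε) (hε : 0 ≤ ε) {h σ : ℝ}
    (hq : 2 * C * q ≤ h)
    (hexc : wsum w (exceptional dim d w bot h (supp g)) ≤ C ^ 3 * σ * wsum w (supp g))
    (hσ : 3 * C ^ 8 * σ < ε) : g = 0 := by
  have hC0 := hC.const_pos
  have hexc_nonneg := wsum_nonneg hC.weight_nonneg (exceptional dim d w bot h (supp g))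
  have hedge' : ∀ e ∈ supp g,
      ε ≤ wsum (linkWeight dim d w e) (star (spanned dim 2 (supp g)) e) := fun e he =>
    (hedge e (mem_supp.1 he).1).le_wsum_star_spanned hε hP hC.pos hg he
  have hvertex' : ∀ v ∈ heavy dim d w h (supp g),
      ε * wsum (linkWeight dim d w v) (star (supp g) v) ≤
        2 * C ^ 2 * wsum (linkWeight dim d w v) (crossing dim (supp g) v) := fun v hv => by
    obtain ⟨hv0, hheavy⟩ := Finset.mem_filter.1 hv
    rw [mem_faces] at hv0
    exact hC.mul_wsum_star_le_crossing hv0 hg (hmock v hv0) (hvertex v hv0) hε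
      (hq.trans hheavy.le)
  have hexpand : ε * wsum w (supp g) ≤ 3 * C ^ 8 * σ * wsum w (supp g) :=
    calc ε * wsum w (supp g)
        ≤ (C ^ 3 * (2 * C ^ 2) + C ^ 2) * wsum w (exceptional dim d w bot h (supp g)) :=
          hC.mul_wsum_le_exceptional hP (supp_subset_faces g) hε (by positivity) hedge' hvertex'
      _ ≤ (C ^ 3 * (2 * C ^ 2) + C ^ 5) * wsum w (exceptional dim d w bot h (supp g)) := by
          gcongr
          exacts [hC.one_le, by norm_num]
      _ ≤ (C ^ 3 * (2 * C ^ 2) + C ^ 5) * (C ^ 3 * σ * wsum w (supp g)) := by gcongr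
      _ = 3 * C ^ 8 * σ * wsum w (supp g) := by ring
  exact hC.eq_zero_of_wsum_supp_nonpos (not_lt.1 fun hpos =>
    hexpand.not_gt (mul_lt_mul_of_pos_right hσ hpos))

end IsLocallyBounded

lemma exists_mockMinAt (hP : IsDPoset dim d bot) (hw : ∀ x, 0 ≤ w x) (hq : 0 ≤ q)
    (him : i = m - 1) (f : Cochain dim F i) :
    ∃ f' : Cochain dim F i,
      cnorm dim F w (coboundary dim F sgn res i m f') + q * cnorm dim F w (f - f') ≤
        cnorm dim F w (coboundary dim F sgn res i m f) ∧
      ∀ u, dim u = i →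
        MockMinAt dim F sgn res w q m (coboundary dim F sgn res i m f') u := by
  subst him
  obtain ⟨_, ⟨f', rfl⟩, hmin⟩ := Set.exists_min_image
    (Set.range fun f' => (supp (coboundary dim F sgn res (m - 1) m f'), supp (f - f')))
    (fun p => wsum w p.1 + q * wsum w p.2) (Set.toFinite _) (Set.range_nonempty _)
  rw [Set.forall_mem_range] at hmin
  simp only [cnorm_eq_wsum_supp]
  refine ⟨f', (hmin f).trans_eq ?_, fun u hu b => ?_⟩
  · rw [sub_self, supp_eq_empty_iff.2 rfl, wsum, wsum, Finset.sum_empty, mul_zero, add_zero]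
  have hsupp : supp (f - (f' + extendByZero dim F u b)) ⊆ supp (f - f') ∪ {u} := by
    intro x hx
    obtain ⟨hxm, hne⟩ := mem_supp.1 hx
    by_cases hux : u ≤ x
    · obtain rfl := hP.eq_of_le_of_dim_le hux (by omega)
      exact Finset.mem_union_right _ (Finset.mem_singleton_self u)
    · rw [Pi.sub_apply, Pi.add_apply, extendByZero_apply_of_not_le _ hxm hux, add_zero] at hne
      exact Finset.mem_union_left _ (mem_supp.2 ⟨hxm, hne⟩)
  have hnorm : wsum w (supp (f - (f' + extendByZero dim F u b))) ≤
      wsum w (supp (f - f')) + w u :=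
    (wsum_mono hw hsupp).trans ((wsum_union_le hw _ _).trans_eq
      (congrArg _ (Finset.sum_singleton w u)))
  have hstep := (hmin (f' + extendByZero dim F u b)).trans
    (add_le_add_right (mul_le_mul_of_nonneg_left hnorm hq) _)
  rw [coboundary_add, coboundary_extendByZero] at hstep
  rw [cnorm_eq_wsum_supp, cnorm_eq_wsum_supp]
  linarith

lemma distTo_le {V : Type*} [Fintype V] {dim : V → ℤ} {w : V → ℝ} {F : V → Type*}
    [∀ x, AddCommGroup (F x)] {i : ℤ} (hw : ∀ x, 0 ≤ w x)
    {f g : Cochain dim F i} {S : Set (Cochain dim F i)} (hg : g ∈ S) :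
    distTo dim F w f S ≤ cnorm dim F w (f - g) := by
  refine csInf_le ⟨0, ?_⟩ ⟨g, hg, rfl⟩
  rintro _ ⟨g', -, rfl⟩
  exact (wsum_nonneg hw _).trans_eq (cnorm_eq_wsum_supp _).symm

lemma mul_distTo_le (hP : IsDPoset dim d bot) (hw : IsProperWeight dim d w)
    (hs : IsOrientation R dim sgn) (hr : IsSheafRes R F res) (him : i = m - 1) {c : ℝ}
    (hc : 0 ≤ c) (hcq : c ≤ q)
    (hvanish : ∀ g : Cochain dim F m, coboundary dim F sgn res m (m + 1) g = 0 →
      cnorm dim F w g ≤ c → (∀ u, dim u = i → MockMinAt dim F sgn res w q m g u) → g = 0)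
    (f : Cochain dim F i) :
    c * distTo dim F w f {g | coboundary dim F sgn res i m g = 0} ≤
      cnorm dim F w (coboundary dim F sgn res i m f) := by
  have hw0 : ∀ x, 0 ≤ w x := fun x => (hw.pos x).le
  obtain hlarge | hsmall := le_total c (cnorm dim F w (coboundary dim F sgn res i m f))
  · have hdist : distTo dim F w f {g | coboundary dim F sgn res i m g = 0} ≤ 1 := by
      have hzero : (0 : Cochain dim F i) ∈ {g | coboundary dim F sgn res i m g = 0} :=
        coboundary_zero
      refine (distTo_le hw0 hzero).trans ?_
      rw [cnorm_eq_wsum_supp]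
      exact (wsum_mono hw0 (supp_subset_faces _)).trans (hw.wsum_faces_le_one i)
    exact (mul_le_of_le_one_right hc hdist).trans hlarge
  obtain ⟨f', hf', hmock⟩ := exists_mockMinAt (sgn := sgn) (res := res) hP hw0 (hc.trans hcq) him f
  have hnorm {j : ℤ} (g : Cochain dim F j) : 0 ≤ cnorm dim F w g :=
    (wsum_nonneg hw0 _).trans_eq (cnorm_eq_wsum_supp g).symm
  have hdiff : 0 ≤ q * cnorm dim F w (f - f') := mul_nonneg (hc.trans hcq) (hnorm _)
  have hcocycle : coboundary dim F sgn res i m f' = 0 :=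
    hvanish _ (coboundary_coboundary hP hs hr (by omega) rfl f') (by linarith) hmock
  calc c * distTo dim F w f {g | coboundary dim F sgn res i m g = 0}
      ≤ c * cnorm dim F w (f - f') := by
        gcongr
        exact distTo_le hw0 hcocycle
    _ ≤ q * cnorm dim F w (f - f') := mul_le_mul_of_nonneg_right hcq (hnorm _)
    _ ≤ _ := (le_add_of_nonneg_left (hnorm _)).trans hf'

lemma div_inv_add_inv_le {a x y : ℝ} (ha : 0 ≤ a) (hx : 0 < x) (hy : 0 ≤ y) :
    a / (x⁻¹ + y⁻¹) ≤ a * x := by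
  rw [← div_inv_eq_mul]
  exact div_le_div_of_nonneg_left ha (by positivity) (le_add_of_nonneg_right (by positivity))

namespace IsLocallyBounded

variable (hC : IsLocallyBounded dim d w C)
include hC

lemma mul_distTo_cocycles_le (hP : IsDPoset dim d bot) (hw : IsProperWeight dim d w)
    (hs : IsOrientation R dim sgn) (hr : IsSheafRes R F res) (hε : 0 < ε)
    {α0 β0 αm1 βm1 αpar βpar h0 hm1 hpar : ℝ} (hα0 : 0 ≤ α0) (hβ0 : 0 ≤ β0) (hαm1 : 0 ≤ αm1)
    (hβm1 : 0 ≤ βm1) (hαpar : 0 ≤ αpar) (hβpar : 0 ≤ βpar)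
    (hedge : ∀ e, dim e = 1 → LinkCbeGe dim F sgn res w d e 1 ε)
    (hvertex : ∀ v, dim v = 0 → LinkCbeGe dim F sgn res w d v 1 ε)
    (hexp0 : ∀ v, dim v = 0 → LinkUgrSkeletonExpander dim d w v α0 β0)
    (hexpm1 : UgrSkeletonExpander dim w αm1 βm1)
    (hexppar : NI112SkeletonExpander dim w bot αpar βpar)
    (hh0 : 0 < h0) (hhm1 : 0 < hm1) (hhm1' : hm1 ≤ 1) (hhpar : 0 < hpar)
    (hsum : (α0 + β0 * h0) + (αpar + βpar * hpar) + (αm1 + βm1 * hm1) / h0 ≤ 1 / (4 * C ^ 8) * ε)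
    (f : Cochain dim F 0) :
    1 / (2 * C ^ 2) / (h0⁻¹ * hm1⁻¹ + hpar⁻¹) * distTo dim F w f (cocycles dim F sgn res 0) ≤
      cnorm dim F w (coboundary dim F sgn res 0 1 f) := by
  have hC0 := hC.const_pos
  set c := 1 / (2 * C ^ 2) / (h0⁻¹ * hm1⁻¹ + hpar⁻¹) with hc
  have hc_h0hm1 : c ≤ 1 / (2 * C ^ 2) * (h0 * hm1) := by
    rw [hc, ← mul_inv]
    exact div_inv_add_inv_le (by positivity) (by positivity) hhpar.le
  have hc_hpar : c ≤ 1 / (2 * C ^ 2) * hpar := by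
    rw [hc, add_comm, ← mul_inv]
    exact div_inv_add_inv_le (by positivity) hhpar (by positivity)
  have hC2 : 1 ≤ 2 * C ^ 2 := by nlinarith [hC.one_le]
  have hcq : c ≤ h0 / (2 * C) := by
    calc c ≤ 1 / (2 * C ^ 2) * (h0 * 1) := hc_h0hm1.trans (by gcongr)
      _ ≤ 1 / (2 * C) * (h0 * 1) := by
          gcongr
          exact le_self_pow₀ hC.one_le two_ne_zero
      _ = h0 / (2 * C) := by ring
  refine mul_distTo_le (m := 1) hP hw hs hr (by norm_num) (by positivity) hcq
    (fun g hg hgc hmock => ?_) f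
  rw [cnorm_eq_wsum_supp] at hgc
  have hsmall : C ^ 2 * wsum w (supp g) ≤ h0 * hm1 := by
    calc C ^ 2 * wsum w (supp g) ≤ C ^ 2 * (1 / (2 * C ^ 2) * (h0 * hm1)) := by
          gcongr
          exact hgc.trans hc_h0hm1
      _ = h0 * hm1 / 2 := by field_simp
      _ ≤ h0 * hm1 := half_le_self (by positivity)
  have hsmallpar : wsum w (supp g) ≤ hpar :=
    hgc.trans (hc_hpar.trans
      (mul_le_of_le_one_left hhpar.le (div_le_one_of_le₀ hC2 (by positivity))))
  have hexc := hC.wsum_exceptional_le hP (supp_subset_faces g) hα0 hβ0 hαm1 hβm1 hαpar hβpar hh0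
    hhm1.le hexp0 hexpm1 hexppar hsmall hsmallpar
  refine hC.eq_zero_of_mockMinAt hP hg hmock hedge hvertex hε.le
    (mul_div_cancel₀ h0 (by positivity)).le hexc ?_
  calc _ ≤ 3 * C ^ 8 * (1 / (4 * C ^ 8) * ε) := by gcongr
    _ = 3 / 4 * ε := by field_simp
    _ < ε := by linarith

lemma mul_wsum_supp_le_spanned (hP : IsDPoset dim d bot) (hε : 0 ≤ ε) {g : Cochain dim F 0}
    (hg : g ∈ cocycles dim F sgn res 0)
    (hcbe : ∀ v, dim v = 0 → LinkCbeGe dim F sgn res w d v 0 ε) :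
    ε * wsum w (supp g) ≤ C ^ 2 * wsum w (spanned dim 1 (supp g)) := by
  refine le_trans ?_ (hC.sum_mul_wsum_linkWeight_star_le le_rfl zero_lt_one one_le_two
    (supp_subset_faces g) (spanned_subset_faces 1))
  rw [wsum, Finset.mul_sum]
  refine Finset.sum_le_sum fun v hv => ?_
  rw [mul_comm]
  exact mul_le_mul_of_nonneg_left
    ((hcbe v (mem_supp.1 hv).1).le_wsum_star_spanned hε hP hC.pos hg hv) (hC.weight_nonneg v)

lemma le_cnorm_of_mem_cocycles (hP : IsDPoset dim d bot) (hε : 0 ≤ ε) {α β : ℝ} (hβ : 0 < β)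
    (hcbe : ∀ v, dim v = 0 → LinkCbeGe dim F sgn res w d v 0 ε)
    (hexp : UgrSkeletonExpander dim w α β) {g : Cochain dim F 0}
    (hg : g ∈ cocycles dim F sgn res 0) (hg0 : g ≠ 0) :
    (1 / C ^ 2 * ε - α) / β ≤ cnorm dim F w g := by
  have hC0 := hC.const_pos
  rw [cnorm_eq_wsum_supp, div_le_iff₀' hβ, sub_le_iff_le_add', one_div_mul_eq_div,
    div_le_iff₀' (by positivity)]
  have hpos : 0 < wsum w (supp g) :=
    not_le.1 fun hle => hg0 (hC.eq_zero_of_wsum_supp_nonpos hle)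
  refine le_of_mul_le_mul_right ?_ hpos
  calc ε * wsum w (supp g)
      ≤ C ^ 2 * wsum w (spanned dim 1 (supp g)) := hC.mul_wsum_supp_le_spanned hP hε hg hcbe
    _ ≤ C ^ 2 * (α * wsum w (supp g) + β * wsum w (supp g) ^ 2) := by
        gcongr
        exact hexp (supp g) (supp_subset_faces g)
    _ = C ^ 2 * (α + β * wsum w (supp g)) * wsum w (supp g) := by ring

end IsLocallyBounded

end Expansion

end FK

theorem statement1_general (Fc : ℕ) (L : ℝ) (hL : 1 ≤ L) :
    ∃ E E' E'' E''' : ℝ, 0 < E ∧ 0 < E' ∧ 0 < E'' ∧ 0 < E''' ∧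
      ∀ (V : Type*) (_ : Fintype V) (_ : PartialOrder V) (dim : V → ℤ) (d : ℤ) (bot : V),
        FK.IsDPoset dim d bot → 2 ≤ d → FK.LowerIrregularityLE dim d L →
        FK.Fmax dim (-1) 0 2 ≤ Fc → FK.Fmax dim (-1) 1 2 ≤ Fc →
        ∀ w : V → ℝ, FK.IsProperWeight dim d w →
        ∀ (R : Type*) (_ : CommRing R) (sgn : V → V → R), FK.IsOrientation R dim sgn →
        ∀ (F : V → Type*) (_ : ∀ x, AddCommGroup (F x)) (_ : ∀ x, Module R (F x))
          (res : ∀ x y : V, x ≤ y → (F x →ₗ[R] F y)), FK.IsSheafRes R F res →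
        ∀ αm1 βm1 : ℝ, FK.UgrSkeletonExpander dim w αm1 βm1 →
        (∀ ε' α0 β0 αpar βpar h0 hm1 hpar : ℝ, 0 < ε' →
          0 ≤ α0 → 0 ≤ β0 → 0 ≤ αm1 → 0 ≤ βm1 → 0 ≤ αpar → 0 ≤ βpar →
          (∀ e : V, dim e = 1 → FK.LinkCbeGe dim F sgn res w d e 1 ε') →
          (∀ v : V, dim v = 0 → FK.LinkCbeGe dim F sgn res w d v 1 ε') →
          (∀ v : V, dim v = 0 → FK.LinkUgrSkeletonExpander dim d w v α0 β0) →
          FK.NI112SkeletonExpander dim w bot αpar βpar →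
          0 < h0 → 0 < hm1 → hm1 ≤ 1 → 0 < hpar →
          (α0 + β0 * h0) + (αpar + βpar * hpar) + (αm1 + βm1 * hm1) / h0 ≤ E' * ε' →
          ∀ f : FK.Cochain dim F 0,
            E'' / (h0⁻¹ * hm1⁻¹ + hpar⁻¹) *
                FK.distTo dim F w f (FK.cocycles dim F sgn res 0) ≤
              FK.cnorm dim F w (FK.coboundary dim F sgn res 0 1 f)) ∧
        (∀ ε : ℝ, 0 ≤ ε → 0 < βm1 →
          (∀ v : V, dim v = 0 → FK.LinkCbeGe dim F sgn res w d v 0 ε) →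
          ∀ f : FK.Cochain dim F 0, f ∈ FK.cocycles dim F sgn res 0 → f ≠ 0 →
            E''' * (E * ε - αm1) / βm1 ≤ FK.cnorm dim F w f) := by
  set N : ℝ := max Fc 1
  set C : ℝ := L ^ 3 * N
  have : 0 < C := by positivity
  refine ⟨1 / C ^ 2, 1 / (4 * C ^ 8), 1 / (2 * C ^ 2), 1, by positivity, by positivity,
    by positivity, one_pos, ?_⟩
  intro V _ _ dim d bot hP hd hirr h02 h12 w hw R _ sgn hs F _ _ res hr αm1 βm1 hexpm1
  have hloc : FK.IsLocallyBounded dim d w C :=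
    hw.isLocallyBounded hP hd hL (le_max_right _ _) hirr
      (le_max_of_le_left (Nat.cast_le.2 h02)) (le_max_of_le_left (Nat.cast_le.2 h12))
  constructor
  · intro ε' α0 β0 αpar βpar h0 hm1 hpar hε' hα0 hβ0 hαm1 hβm1 hαpar hβpar hedge hvertex hexp0
      hexppar hh0 hhm1 hhm1' hhpar hsum
    exact hloc.mul_distTo_cocycles_le hP hw hs hr hε' hα0 hβ0 hαm1 hβm1 hαpar hβpar hedge hvertex
      hexp0 hexpm1 hexppar hh0 hhm1 hhm1' hhpar hsum
  · intro ε hε hβm1 hcbe f hf hf0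
    rw [one_mul]
    exact hloc.le_cnorm_of_mem_cocycles hP hε hβm1 hcbe hexpm1 hf hf0

/-- criterion for 0-cosystolic expansion. -/
theorem statement1 (Fc : ℕ) (L : ℝ) (hL : 1 ≤ L) :
    ∃ E E' E'' E''' : ℝ, 0 < E ∧ 0 < E' ∧ 0 < E'' ∧ 0 < E''' ∧
      ∀ (V : Type) (_ : Fintype V) (_ : PartialOrder V) (dim : V → ℤ) (d : ℤ) (bot : V),
        FK.IsDPoset dim d bot → 2 ≤ d →
        (∀ i j k : ℤ, -1 ≤ i → i ≤ j → j ≤ k → k ≤ d →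
          (FK.Fmax dim i j k : ℝ) ≤ L * (FK.Fmin dim i j k : ℝ)) →
        FK.Fmax dim (-1) 0 2 ≤ Fc → FK.Fmax dim (-1) 1 2 ≤ Fc →
        ∀ w : V → ℝ, FK.IsProperWeight dim d w →
        ∀ (R : Type) (_ : CommRing R) (sgn : V → V → R), FK.IsOrientation R dim sgn →
        ∀ (F : V → Type) (_ : ∀ x, AddCommGroup (F x)) (_ : ∀ x, Module R (F x))
          (res : ∀ x y : V, x ≤ y → (F x →ₗ[R] F y)), FK.IsSheafRes R F res →
        ∀ ε ε' : ℝ, 0 < ε → 0 < ε' →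
        ∀ α0 β0 αm1 αpar βpar βm1 : ℝ,
          0 ≤ α0 → 0 ≤ β0 → 0 ≤ αm1 → 0 ≤ αpar → 0 ≤ βpar → 0 < βm1 →
        -- (1a)  cbe₋₁(X_v, w_v, 𝓕_v) ≥ ε for v ∈ X(0)
        (∀ v : V, dim v = 0 → FK.LinkCbeGe dim F sgn res w d v 0 ε) →
        -- (1b)  cbe₋₁(X_e, w_e, 𝓕_e) ≥ ε' for e ∈ X(1)
        (∀ e : V, dim e = 1 → FK.LinkCbeGe dim F sgn res w d e 1 ε') →
        -- (1c)  cbe₀(X_v, w_v, 𝓕_v) ≥ ε' for v ∈ X(0)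
        (∀ v : V, dim v = 0 → FK.LinkCbeGe dim F sgn res w d v 1 ε') →
        -- (2a)
        (∀ v : V, dim v = 0 → FK.LinkUgrSkeletonExpander dim d w v α0 β0) →
        -- (2b)
        FK.UgrSkeletonExpander dim w αm1 βm1 →
        -- (2c)
        FK.NI112SkeletonExpander dim w bot αpar βpar →
        αm1 < E * ε →
        ∀ hm1 h0 hpar : ℝ,
          0 < hm1 → hm1 ≤ 1 → 0 < h0 → h0 ≤ 1 → 0 < hpar → hpar ≤ 1 →
          (α0 + β0 * h0) + (αpar + βpar * hpar) + (αm1 + βm1 * hm1) / h0 ≤ E' * ε' →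
        (∀ f : FK.Cochain dim F 0,
            E'' / (h0⁻¹ * hm1⁻¹ + hpar⁻¹) *
                FK.distTo dim F w f (FK.cocycles dim F sgn res 0) ≤
              FK.cnorm dim F w (FK.coboundary dim F sgn res 0 1 f)) ∧
        (∀ f : FK.Cochain dim F 0,
            f ∈ FK.cocycles dim F sgn res 0 → f ∉ FK.coboundariesSet dim F sgn res 0 →
            E''' * (E * ε - αm1) / βm1 ≤ FK.cnorm dim F w f) := by
  obtain ⟨E, E', E'', E''', hE, hE', hE'', hE''', H⟩ := statement1_general.{0, 0, 0} Fc L hL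
  refine ⟨E, E', E'', E''', hE, hE', hE'', hE''', ?_⟩
  intro V _ _ dim d bot hP hd hirr h02 h12 w hw R _ sgn hs F _ _ res hr ε ε' hε hε'
    α0 β0 αm1 αpar βpar βm1 hα0 hβ0 hαm1 hαpar hβpar hβm1 h1a h1b h1c h2a h2b h2c _
    hm1 h0 hpar hhm1 hhm1' hh0 _ hhpar _ hsum
  obtain ⟨hdist, hcocycle⟩ := H V _ _ dim d bot hP hd hirr h02 h12 w hw R _ sgn hs F _ _ res hr
    αm1 βm1 h2b
  refine ⟨hdist ε' α0 β0 αpar βpar h0 hm1 hpar hε' hα0 hβ0 hαm1 hβm1.le hαpar hβpar h1b h1c h2a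
    h2c hh0 hhm1 hhm1' hhpar hsum, fun f hf hfB => hcocycle ε hε.le hβm1 h1a f hf ?_⟩
  rintro rfl
  exact hfB ⟨0, FK.coboundary_zero⟩
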